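/- arXiv:0710.2614 — 4 statements merged into one kernel-verified Lean document; each statement's English description precedes it below -/
import Mathlib

section
/- Let a, b ∈ ℝ with a < b and let n ≥ 2. Define the sample variance s²(x) = (1/(n−1)) Σ_{i=1}^n (x_i − (1/n) Σ_{j=1}^n x_j)² for x ∈ [a,b]^n. Then (1/(b−a)^n) ∫_{[a,b]^n} s²(x)/(max_i x_i − min_i x_i) dx = ((n+2)/(12n)) (b−a). -/
open MeasureTheory

namespace AVR

variable {n : ℕ}

/-- maximum of the coordinates -/
noncomputable def mx (h : (Finset.univ : Finset (Fin n)).Nonempty) (x : Fin n → ℝ) : ℝ :=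
  Finset.univ.sup' h x

/-- minimum of the coordinates -/
noncomputable def mn (h : (Finset.univ : Finset (Fin n)).Nonempty) (x : Fin n → ℝ) : ℝ :=
  Finset.univ.inf' h x

/-- sample variance -/
noncomputable def sv (x : Fin n → ℝ) : ℝ :=
  1 / ((n : ℝ) - 1) * ∑ i : Fin n, (x i - 1 / (n : ℝ) * ∑ j : Fin n, x j) ^ 2

/-- the ratio -/
noncomputable def ra (h : (Finset.univ : Finset (Fin n)).Nonempty) (x : Fin n → ℝ) : ℝ :=
  sv x / (mx h x - mn h x)

/-- box -/
def bx (n : ℕ) (u v : ℝ) : Set (Fin n → ℝ) := Set.univ.pi fun _ : Fin n => Set.Icc u v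

lemma mem_bx {u v : ℝ} {x : Fin n → ℝ} : x ∈ bx n u v ↔ ∀ i, u ≤ x i ∧ x i ≤ v := by
  simp only [bx, Set.mem_univ_pi, Set.mem_Icc]

lemma meas_bx (u v : ℝ) : MeasurableSet (bx n u v) :=
  MeasurableSet.univ_pi fun _ => measurableSet_Icc

variable (h : (Finset.univ : Finset (Fin n)).Nonempty)

lemma cont_mx : Continuous (mx h) :=
  Continuous.finset_sup'_apply h (fun i _ => continuous_apply i)

lemma cont_mn : Continuous (mn h) :=
  Continuous.finset_inf'_apply h (fun i _ => continuous_apply i)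

lemma cont_sv : Continuous (sv (n := n)) := by
  unfold sv; fun_prop

lemma meas_ra : Measurable (ra h) :=
  (cont_sv.measurable).div ((cont_mx h).measurable.sub (cont_mn h).measurable)

lemma le_mx (x : Fin n → ℝ) (i : Fin n) : x i ≤ mx h x :=
  Finset.le_sup' x (Finset.mem_univ i)

lemma mn_le (x : Fin n → ℝ) (i : Fin n) : mn h x ≤ x i :=
  Finset.inf'_le x (Finset.mem_univ i)

lemma mx_le_iff (x : Fin n → ℝ) (c : ℝ) : mx h x ≤ c ↔ ∀ i, x i ≤ c := by
  simp [mx]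

lemma le_mn_iff (x : Fin n → ℝ) (c : ℝ) : c ≤ mn h x ↔ ∀ i, c ≤ x i := by
  simp [mn]

lemma mx_aff (r u : ℝ) (hr : 0 < r) (x : Fin n → ℝ) :
    mx h (r • x + fun _ => u) = r * mx h x + u := by
  have hm : Monotone fun t : ℝ => r * t + u := fun a b hab => by
    simp only; gcongr
  exact (Finset.apply_sup'_eq_sup'_comp h (fun t : ℝ => r * t + u)
    (fun a b => hm.map_sup a b)).symm

lemma mn_aff (r u : ℝ) (hr : 0 < r) (x : Fin n → ℝ) :
    mn h (r • x + fun _ => u) = r * mn h x + u := by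
  have hm : Monotone fun t : ℝ => r * t + u := fun a b hab => by
    simp only; gcongr
  exact (Finset.apply_inf'_eq_inf'_comp h (fun t : ℝ => r * t + u)
    (fun a b => hm.map_inf a b)).symm

lemma n_pos (h : (Finset.univ : Finset (Fin n)).Nonempty) : 0 < n := by
  obtain ⟨i, -⟩ := h
  exact i.pos

lemma sv_aff (h : (Finset.univ : Finset (Fin n)).Nonempty) (r u : ℝ) (x : Fin n → ℝ) :
    sv (r • x + fun _ => u) = r ^ 2 * sv x := by
  have hn : (n : ℝ) ≠ 0 := by exact_mod_cast (n_pos h).ne'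
  unfold sv
  have key : ∑ i : Fin n, ((r • x + fun _ => u : Fin n → ℝ) i -
      1 / (n : ℝ) * ∑ j : Fin n, (r • x + fun _ => u : Fin n → ℝ) j) ^ 2 =
      r ^ 2 * ∑ i : Fin n, (x i - 1 / (n : ℝ) * ∑ j : Fin n, x j) ^ 2 := by
    rw [Finset.mul_sum _ _ (r ^ 2)]
    refine Finset.sum_congr rfl fun i _ => ?_
    rw [← mul_pow]
    congr 1
    simp only [Pi.add_apply, Pi.smul_apply, smul_eq_mul, Finset.sum_add_distrib, ← Finset.mul_sum,
      Finset.sum_const, Finset.card_univ, Fintype.card_fin, nsmul_eq_mul]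
    field_simp
    ring
  rw [key]; ring

lemma ra_aff (r u : ℝ) (hr : 0 < r) (x : Fin n → ℝ) :
    ra h (r • x + fun _ => u) = r * ra h x := by
  unfold ra
  rw [mx_aff h r u hr, mn_aff h r u hr, sv_aff h]
  have : r * mx h x + u - (r * mn h x + u) = r * (mx h x - mn h x) := by ring
  rw [this, sq, mul_assoc, mul_div_mul_left _ _ hr.ne', mul_div_assoc]

lemma scale (u v : ℝ) (huv : u < v) :
    ∫ x in bx n u v, ra h x = (v - u) ^ (n + 1) * ∫ x in bx n 0 1, ra h x := by
  have hr : 0 < v - u := sub_pos.2 huv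
  rw [← integral_indicator (meas_bx u v), ← integral_indicator (meas_bx 0 1),
    ← integral_add_right_eq_self _ (fun _ => u : Fin n → ℝ)]
  have h1 := Measure.integral_comp_smul (volume : Measure (Fin n → ℝ))
    (fun x => (bx n u v).indicator (ra h) (x + fun _ => u)) (v - u)
  have h2 : ∀ x : Fin n → ℝ, (bx n u v).indicator (ra h) ((v - u) • x + fun _ => u) =
      (v - u) * (bx n 0 1).indicator (ra h) x := by
    intro x
    have hmem : ((v - u) • x + fun _ => u) ∈ bx n u v ↔ x ∈ bx n 0 1 := by
      simp only [mem_bx, Pi.add_apply, Pi.smul_apply, smul_eq_mul]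
      refine forall_congr' fun i => ?_
      constructor
      · rintro ⟨a1, a2⟩
        exact ⟨by nlinarith, by nlinarith⟩
      · rintro ⟨a1, a2⟩
        exact ⟨by nlinarith, by nlinarith⟩
    by_cases hx : x ∈ bx n 0 1
    · rw [Set.indicator_of_mem hx, Set.indicator_of_mem (hmem.2 hx), ra_aff h _ _ hr]
    · rw [Set.indicator_of_notMem hx, Set.indicator_of_notMem (fun hh => hx (hmem.1 hh)), mul_zero]
  simp only [h2] at h1
  rw [integral_const_mul] at h1
  simp only [Module.finrank_fintype_fun_eq_card, Fintype.card_fin, smul_eq_mul] at h1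
  rw [abs_of_pos (by positivity)] at h1
  have h3 : (v - u) ^ n ≠ 0 := by positivity
  rw [pow_succ, mul_assoc, h1, mul_inv_cancel_left₀ h3]

lemma mn_le_mx (x : Fin n → ℝ) : mn h x ≤ mx h x := by
  obtain ⟨i, -⟩ := id h
  exact (mn_le h x i).trans (le_mx h x i)

lemma sv_le (hn : 2 ≤ n) (x : Fin n → ℝ) :
    sv x ≤ 1 / ((n : ℝ) - 1) * (n * (mx h x - mn h x) ^ 2) := by
  have hn' : (2 : ℝ) ≤ n := by exact_mod_cast hn
  have hn1 : (0 : ℝ) < n - 1 := by linarith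
  unfold sv
  have hs1 : ∑ j : Fin n, x j ≤ n * mx h x := by
    simpa using Finset.sum_le_card_nsmul Finset.univ x (mx h x) (fun i _ => le_mx h x i)
  have hs2 : n * mn h x ≤ ∑ j : Fin n, x j := by
    simpa using Finset.card_nsmul_le_sum Finset.univ x (mn h x) (fun i _ => mn_le h x i)
  have hm1 : 1 / (n : ℝ) * ∑ j : Fin n, x j ≤ mx h x := by
    rw [one_div, inv_mul_le_iff₀ (by linarith)]; exact hs1
  have hm2 : mn h x ≤ 1 / (n : ℝ) * ∑ j : Fin n, x j := by
    rw [one_div, le_inv_mul_iff₀ (by linarith)]; exact hs2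
  gcongr
  have := Finset.sum_le_card_nsmul Finset.univ
    (fun i => (x i - 1 / (n : ℝ) * ∑ j : Fin n, x j) ^ 2) ((mx h x - mn h x) ^ 2) (fun i _ => by
      have := le_mx h x i
      have := mn_le h x i
      exact sq_le_sq' (by linarith) (by linarith))
  simpa using this

lemma sv_nonneg (hn : 2 ≤ n) (x : Fin n → ℝ) : 0 ≤ sv x := by
  have hn' : (2 : ℝ) ≤ n := by exact_mod_cast hn
  have hn1 : (0 : ℝ) < n - 1 := by linarith
  unfold sv
  positivity

lemma ra_mul (hn : 2 ≤ n) (x : Fin n → ℝ) : ra h x * (mx h x - mn h x) = sv x := by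
  unfold ra
  by_cases hx : mx h x - mn h x = 0
  · have h1 := sv_le h hn x
    have h2 := sv_nonneg hn x
    rw [hx] at h1 ⊢
    simp at h1 ⊢
    linarith
  · exact div_mul_cancel₀ _ hx

lemma ra_int (hn : 2 ≤ n) : Integrable (ra h) (volume.restrict (bx n 0 1)) := by
  have hn' : (2 : ℝ) ≤ n := by exact_mod_cast hn
  have hn1 : (0 : ℝ) < n - 1 := by linarith
  have hfin : volume (bx n 0 1) < ⊤ := by
    have : IsCompact (bx n 0 1) := isCompact_univ_pi fun _ => isCompact_Icc
    exact this.measure_lt_top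
  have : IsFiniteMeasure (volume.restrict (bx n 0 1)) := ⟨by simpa using hfin⟩
  refine Integrable.of_bound (meas_ra h).aestronglyMeasurable (1 / ((n : ℝ) - 1) * n) ?_
  filter_upwards [ae_restrict_mem (meas_bx 0 1)] with x hx
  rw [mem_bx] at hx
  have h1 : mx h x ≤ 1 := (mx_le_iff h x 1).2 fun i => (hx i).2
  have h2 : 0 ≤ mn h x := (le_mn_iff h x 0).2 fun i => (hx i).1
  have h3 := mn_le_mx h x
  have h4 := sv_nonneg hn x
  have hR : 0 ≤ mx h x - mn h x := by linarith
  unfold ra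
  rw [Real.norm_of_nonneg (div_nonneg h4 hR)]
  refine div_le_of_le_mul₀ hR (by positivity) ((sv_le h hn x).trans ?_)
  rw [mul_assoc]
  gcongr
  nlinarith

lemma int_sq : ∫ t in Set.Icc (0 : ℝ) 1, (t - 1 / 2) * (t - 1 / 2) = 1 / 12 := by
  rw [integral_Icc_eq_integral_Ioc, ← intervalIntegral.integral_of_le zero_le_one]
  have : ∀ t : ℝ, (t - 1 / 2) * (t - 1 / 2) = (t - 1 / 2) ^ 2 := fun t => by ring
  simp only [this]
  rw [intervalIntegral.integral_comp_sub_right (fun t => t ^ 2)]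
  norm_num

lemma int_lin : ∫ t in Set.Icc (0 : ℝ) 1, (t - 1 / 2) = 0 := by
  rw [integral_Icc_eq_integral_Ioc, ← intervalIntegral.integral_of_le zero_le_one]
  rw [intervalIntegral.integral_comp_sub_right (fun t => t)]
  norm_num

lemma int_cross (i j : Fin n) :
    ∫ x in bx n 0 1, (x i - 1 / 2) * (x j - 1 / 2) = if i = j then 1 / 12 else 0 := by
  have e : ∀ x : Fin n → ℝ, (x i - 1 / 2) * (x j - 1 / 2) =
      ∏ k, (if k = i then x k - 1 / 2 else 1) * (if k = j then x k - 1 / 2 else 1) := by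
    intro x
    rw [Finset.prod_mul_distrib, Finset.prod_ite_eq', Finset.prod_ite_eq']
    simp
  simp only [e]
  rw [bx, volume_pi, Measure.restrict_pi_pi, integral_fintype_prod_eq_prod
    (fun k t => (if k = i then t - 1 / 2 else 1) * (if k = j then t - 1 / 2 else (1 : ℝ)))]
  split_ifs with hij
  · subst hij
    rw [Finset.prod_eq_single i]
    · simpa using int_sq
    · intro k _ hk
      simp [hk]
    · simp
  · refine Finset.prod_eq_zero (Finset.mem_univ i) ?_
    simpa [hij] using int_lin

lemma intble_bx (g : (Fin n → ℝ) → ℝ) (hg : Continuous g) :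
    Integrable g (volume.restrict (bx n 0 1)) :=
  hg.continuousOn.integrableOn_compact (isCompact_univ_pi fun _ => isCompact_Icc)

lemma int_sv (hn : 2 ≤ n) : ∫ x in bx n 0 1, sv x = 1 / 12 := by
  have hn' : (2 : ℝ) ≤ n := by exact_mod_cast hn
  have hn1 : (n : ℝ) - 1 ≠ 0 := by linarith
  have hn0 : (n : ℝ) ≠ 0 := by linarith
  have e : ∀ x : Fin n → ℝ, sv x = 1 / ((n : ℝ) - 1) *
      (∑ i, (x i - 1 / 2) * (x i - 1 / 2)
        - 1 / n * ∑ i, ∑ j, (x i - 1 / 2) * (x j - 1 / 2)) := by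
    intro x
    unfold sv
    congr 1
    rw [← Finset.sum_mul_sum]
    have hS : ∑ j, x j = ∑ j, (x j - 1 / 2) + n / 2 := by
      simp [Finset.sum_sub_distrib]; ring
    set S := ∑ j, (x j - 1 / 2) with hSd
    rw [hS]
    have : ∀ i, (x i - 1 / n * (S + n / 2)) ^ 2 =
        (x i - 1 / 2) * (x i - 1 / 2) - 2 * (S / n) * (x i - 1 / 2) + (S / n) ^ 2 := by
      intro i; field_simp; ring
    simp only [this]
    rw [Finset.sum_add_distrib, Finset.sum_sub_distrib, ← Finset.mul_sum, ← hSd]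
    simp
    field_simp
    ring
  simp only [e]
  rw [integral_const_mul, integral_sub (intble_bx _ (by fun_prop)) (intble_bx _ (by fun_prop)),
    integral_const_mul, integral_finsetSum _ (fun i _ => intble_bx _ (by fun_prop)),
    integral_finsetSum _ (fun i _ => intble_bx _ (by fun_prop))]
  have e2 : ∀ i : Fin n, ∫ x in bx n 0 1, ∑ j, (x i - 1 / 2) * (x j - 1 / 2) = 1 / 12 := by
    intro i
    rw [integral_finsetSum _ (fun i _ => intble_bx _ (by fun_prop))]
    simp only [int_cross]
    simp
  simp only [e2, int_cross]
  simp
  field_simp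

lemma fub (hn : 2 ≤ n) (S : Set ((Fin n → ℝ) × ℝ)) (hS : MeasurableSet S) :
    ∫ x in bx n 0 1, ra h x * ∫ u in Set.Icc (0 : ℝ) 1, S.indicator (fun _ => (1 : ℝ)) (x, u) =
    ∫ u in Set.Icc (0 : ℝ) 1, ∫ x in bx n 0 1, ra h x * S.indicator (fun _ => (1 : ℝ)) (x, u) := by
  rw [← integral_integral_swap]
  · simp only [integral_const_mul]
  · have h1 : Integrable (fun z : (Fin n → ℝ) × ℝ => ra h z.1 * 1)
        ((volume.restrict (bx n 0 1)).prod (volume.restrict (Set.Icc (0 : ℝ) 1))) :=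
      (ra_int h hn).mul_prod (integrable_const (1 : ℝ))
    refine h1.mono ?_ ?_
    · refine Measurable.aestronglyMeasurable ?_
      exact ((meas_ra h).comp measurable_fst).mul (measurable_const.indicator hS)
    · refine Filter.Eventually.of_forall fun z => ?_
      simp only [Function.uncurry, norm_mul]
      gcongr
      by_cases hz : z ∈ S <;> simp [hz]

lemma int_mn (hn : 2 ≤ n) : ∫ x in bx n 0 1, ra h x * mn h x =
    (∫ x in bx n 0 1, ra h x) / (n + 2) := by
  have hS : MeasurableSet {z : (Fin n → ℝ) × ℝ | z.2 ≤ mn h z.1} :=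
    measurableSet_le measurable_snd ((cont_mn h).measurable.comp measurable_fst)
  have hf := fub h hn _ hS
  have l : ∫ x in bx n 0 1, ra h x * mn h x = ∫ x in bx n 0 1, ra h x *
      ∫ u in Set.Icc (0 : ℝ) 1,
        {z : (Fin n → ℝ) × ℝ | z.2 ≤ mn h z.1}.indicator (fun _ => (1 : ℝ)) (x, u) := by
    refine setIntegral_congr_fun (meas_bx 0 1) fun x hx => ?_
    rw [mem_bx] at hx
    have h1 : mx h x ≤ 1 := (mx_le_iff h x 1).2 fun i => (hx i).2
    have h2 : 0 ≤ mn h x := (le_mn_iff h x 0).2 fun i => (hx i).1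
    have h3 := mn_le_mx h x
    congr 1
    have : ∀ u, {z : (Fin n → ℝ) × ℝ | z.2 ≤ mn h z.1}.indicator (fun _ => (1 : ℝ)) (x, u) =
        (Set.Iic (mn h x)).indicator (fun _ => (1 : ℝ)) u := fun u => by
      simp [Set.indicator_apply]
    simp only [this]
    rw [setIntegral_indicator measurableSet_Iic]
    have : Set.Icc (0 : ℝ) 1 ∩ Set.Iic (mn h x) = Set.Icc 0 (mn h x) := by
      ext t; simp only [Set.mem_inter_iff, Set.mem_Icc, Set.mem_Iic]
      constructor
      · rintro ⟨⟨a, b⟩, c⟩; exact ⟨a, c⟩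
      · rintro ⟨a, c⟩; exact ⟨⟨a, by linarith⟩, c⟩
    rw [this]
    simp [h2]
  rw [l, hf]
  have r : ∀ u ∈ Set.Ico (0 : ℝ) 1, ∫ x in bx n 0 1, ra h x *
      {z : (Fin n → ℝ) × ℝ | z.2 ≤ mn h z.1}.indicator (fun _ => (1 : ℝ)) (x, u) =
      (1 - u) ^ (n + 1) * ∫ x in bx n 0 1, ra h x := by
    intro u hu
    rw [← scale h u 1 hu.2, ← integral_indicator (meas_bx 0 1), ← integral_indicator (meas_bx u 1)]
    congr 1
    ext x
    have : x ∈ bx n u 1 ↔ x ∈ bx n 0 1 ∧ u ≤ mn h x := by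
      rw [mem_bx, mem_bx, le_mn_iff]
      constructor
      · intro H; exact ⟨fun i => ⟨hu.1.trans (H i).1, (H i).2⟩, fun i => (H i).1⟩
      · rintro ⟨H, H'⟩ i; exact ⟨H' i, (H i).2⟩
    by_cases a1 : x ∈ bx n 0 1 <;> by_cases a2 : u ≤ mn h x <;>
      simp [Set.indicator_apply, this, a1, a2]
  rw [integral_Icc_eq_integral_Ico, setIntegral_congr_fun measurableSet_Ico r,
    integral_mul_const, integral_Ico_eq_integral_Ioc, ← intervalIntegral.integral_of_le zero_le_one,
    intervalIntegral.integral_comp_sub_left (fun t => t ^ (n + 1))]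
  simp
  ring

lemma int_mx (hn : 2 ≤ n) : ∫ x in bx n 0 1, ra h x * (1 - mx h x) =
    (∫ x in bx n 0 1, ra h x) / (n + 2) := by
  have hS : MeasurableSet {z : (Fin n → ℝ) × ℝ | mx h z.1 ≤ z.2} :=
    measurableSet_le ((cont_mx h).measurable.comp measurable_fst) measurable_snd
  have hf := fub h hn _ hS
  have l : ∫ x in bx n 0 1, ra h x * (1 - mx h x) = ∫ x in bx n 0 1, ra h x *
      ∫ u in Set.Icc (0 : ℝ) 1,
        {z : (Fin n → ℝ) × ℝ | mx h z.1 ≤ z.2}.indicator (fun _ => (1 : ℝ)) (x, u) := by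
    refine setIntegral_congr_fun (meas_bx 0 1) fun x hx => ?_
    rw [mem_bx] at hx
    have h1 : mx h x ≤ 1 := (mx_le_iff h x 1).2 fun i => (hx i).2
    have h2 : 0 ≤ mn h x := (le_mn_iff h x 0).2 fun i => (hx i).1
    have h3 := mn_le_mx h x
    congr 1
    have : ∀ u, {z : (Fin n → ℝ) × ℝ | mx h z.1 ≤ z.2}.indicator (fun _ => (1 : ℝ)) (x, u) =
        (Set.Ici (mx h x)).indicator (fun _ => (1 : ℝ)) u := fun u => by
      simp [Set.indicator_apply]
    simp only [this]
    rw [setIntegral_indicator measurableSet_Ici]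
    have : Set.Icc (0 : ℝ) 1 ∩ Set.Ici (mx h x) = Set.Icc (mx h x) 1 := by
      ext t; simp only [Set.mem_inter_iff, Set.mem_Icc, Set.mem_Ici]
      constructor
      · rintro ⟨⟨a, b⟩, c⟩; exact ⟨c, b⟩
      · rintro ⟨a, c⟩; exact ⟨⟨by linarith, c⟩, a⟩
    rw [this]
    simp [h1]
  rw [l, hf]
  have r : ∀ u ∈ Set.Ioc (0 : ℝ) 1, ∫ x in bx n 0 1, ra h x *
      {z : (Fin n → ℝ) × ℝ | mx h z.1 ≤ z.2}.indicator (fun _ => (1 : ℝ)) (x, u) =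
      (u - 0) ^ (n + 1) * ∫ x in bx n 0 1, ra h x := by
    intro u hu
    rw [← scale h 0 u hu.1, ← integral_indicator (meas_bx 0 1), ← integral_indicator (meas_bx 0 u)]
    congr 1
    ext x
    have : x ∈ bx n 0 u ↔ x ∈ bx n 0 1 ∧ mx h x ≤ u := by
      rw [mem_bx, mem_bx, mx_le_iff]
      constructor
      · intro H; exact ⟨fun i => ⟨(H i).1, (H i).2.trans hu.2⟩, fun i => (H i).2⟩
      · rintro ⟨H, H'⟩ i; exact ⟨(H i).1, H' i⟩
    by_cases a1 : x ∈ bx n 0 1 <;> by_cases a2 : mx h x ≤ u <;>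
      simp [Set.indicator_apply, this, a1, a2]
  rw [integral_Icc_eq_integral_Ioc, setIntegral_congr_fun measurableSet_Ioc r,
    integral_mul_const, ← intervalIntegral.integral_of_le zero_le_one]
  simp
  ring

lemma main01 (hn : 2 ≤ n) : ∫ x in bx n 0 1, ra h x = ((n : ℝ) + 2) / (12 * n) := by
  have hn' : (2 : ℝ) ≤ n := by exact_mod_cast hn
  have hI := ra_int h hn
  have hfin : ∀ g : (Fin n → ℝ) → ℝ, Continuous g → (∀ x ∈ bx n 0 1, |g x| ≤ 1) →
      Integrable (fun x => ra h x * g x) (volume.restrict (bx n 0 1)) := by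
    intro g hg hb
    refine hI.mul_bdd (c := 1) hg.aestronglyMeasurable ?_
    filter_upwards [ae_restrict_mem (meas_bx 0 1)] with x hx using hb x hx
  have hb : ∀ x ∈ bx n 0 1, 0 ≤ mn h x ∧ mn h x ≤ mx h x ∧ mx h x ≤ 1 := fun x hx => by
    rw [mem_bx] at hx
    exact ⟨(le_mn_iff h x 0).2 fun i => (hx i).1, mn_le_mx h x,
      (mx_le_iff h x 1).2 fun i => (hx i).2⟩
  have i1 := hfin (mn h) (cont_mn h) fun x hx => by
    obtain ⟨a, b, c⟩ := hb x hx
    rw [abs_le]; constructor <;> linarith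
  have i2 := hfin (fun x => 1 - mx h x) (continuous_const.sub (cont_mx h)) fun x hx => by
    obtain ⟨a, b, c⟩ := hb x hx
    rw [abs_le]; constructor <;> linarith
  have e : ∀ x, sv x = ra h x - ra h x * mn h x - ra h x * (1 - mx h x) := fun x => by
    rw [← ra_mul h hn]; ring
  have key := int_sv hn
  simp only [e] at key
  have i3 : Integrable (fun x => ra h x - ra h x * mn h x) (volume.restrict (bx n 0 1)) :=
    hI.sub i1
  rw [integral_sub i3 i2, integral_sub hI i1, int_mn h hn, int_mx h hn] at key
  field_simp at key ⊢
  linarith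

end AVR

/-- Formula (3): the average value over `[a,b]^n` of the variance-to-range ratio is
`((n+2)/(12n))(b−a)`, where `s²(x) = (1/(n−1)) Σ_i (x_i − (1/n) Σ_j x_j)²`. -/
theorem average_variance_to_range_ratio (a b : ℝ) (hab : a < b) (n : ℕ) (hn : 2 ≤ n) :
    (1 / (b - a) ^ n) *
        ∫ x in Set.univ.pi fun _ : Fin n => Set.Icc a b,
          (1 / ((n : ℝ) - 1) * ∑ i : Fin n, (x i - 1 / (n : ℝ) * ∑ j : Fin n, x j) ^ 2) /
            (Finset.univ.sup' ⟨⟨0, by omega⟩, Finset.mem_univ _⟩ x -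
              Finset.univ.inf' ⟨⟨0, by omega⟩, Finset.mem_univ _⟩ x)
      = ((n : ℝ) + 2) / (12 * (n : ℝ)) * (b - a) := by
  have h : (Finset.univ : Finset (Fin n)).Nonempty := ⟨⟨0, by omega⟩, Finset.mem_univ _⟩
  have hs := AVR.scale h a b hab
  rw [AVR.main01 h hn] at hs
  have hr : (b - a) ^ n ≠ 0 := pow_ne_zero _ (sub_pos.2 hab).ne'
  refine (congrArg (fun t => 1 / (b - a) ^ n * t) hs).trans ?_
  rw [pow_succ, one_div, mul_assoc, inv_mul_cancel_left₀ hr, mul_comm]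
end

section
/- Let n ≥ 3 and let G(x) = (∏_{i=1}^n x_i)^{1/n} be the geometric mean on (0,1)^n. Then the orness average value of G over [0,1]^n equals n(n−1)(n/(n+1))^{n−2} ∫_0^1 x^n (1−x^{n+1})^{n−2}/(1−x^n) dx − 1/(n−2). -/
open MeasureTheory

namespace OrnessGM

/-- Splitting off the coordinate `i` and then the coordinate `i.succAbove j`. -/
noncomputable def splitEquiv (m : ℕ) (i : Fin (m + 3)) (j : Fin (m + 2)) :
    (Fin (m + 3) → ℝ) ≃ᵐ ℝ × (ℝ × (Fin (m + 1) → ℝ)) :=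
  (MeasurableEquiv.piFinSuccAbove (fun _ => ℝ) i).trans
    (MeasurableEquiv.prodCongr (MeasurableEquiv.refl ℝ)
      (MeasurableEquiv.piFinSuccAbove (fun _ => ℝ) j))

lemma splitEquiv_apply (m : ℕ) (i : Fin (m + 3)) (j : Fin (m + 2)) (x : Fin (m + 3) → ℝ) :
    splitEquiv m i j x =
      (x i, x (i.succAbove j), fun l => x (i.succAbove (j.succAbove l))) := rfl

lemma splitEquiv_mp (m : ℕ) (i : Fin (m + 3)) (j : Fin (m + 2)) :
    MeasurePreserving (splitEquiv m i j) volume volume := by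
  have h1 := volume_preserving_piFinSuccAbove (fun _ : Fin (m + 3) => ℝ) i
  have h2 := volume_preserving_piFinSuccAbove (fun _ : Fin (m + 2) => ℝ) j
  have h3 := (MeasurePreserving.id (volume : Measure ℝ)).prod h2
  exact h3.comp h1

/-- The region: max coordinate, min coordinate, the others strictly between. -/
def region (m : ℕ) : Set (ℝ × (ℝ × (Fin (m + 1) → ℝ))) :=
  {p | 0 < p.2.1 ∧ p.2.1 < p.1 ∧ p.1 < 1 ∧ ∀ l, p.2.1 < p.2.2 l ∧ p.2.2 l < p.1}

lemma measurableSet_region (m : ℕ) : MeasurableSet (region m) := by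
  have : region m = {p | 0 < p.2.1} ∩ ({p | p.2.1 < p.1} ∩ ({p | p.1 < 1} ∩
      ⋂ l, ({p | p.2.1 < p.2.2 l} ∩ {p | p.2.2 l < p.1}))) := by
    ext p; simp [region]
  rw [this]
  refine (measurableSet_lt (by fun_prop) (by fun_prop)).inter
    ((measurableSet_lt (by fun_prop) (by fun_prop)).inter
    ((measurableSet_lt (by fun_prop) (by fun_prop)).inter
    (MeasurableSet.iInter fun l => (measurableSet_lt (by fun_prop) (by fun_prop)).inter
      (measurableSet_lt (by fun_prop) (by fun_prop)))))

lemma mem_pre_max {m : ℕ} {i : Fin (m + 3)} {j : Fin (m + 2)} {x : Fin (m + 3) → ℝ}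
    (h : splitEquiv m i j x ∈ region m) (l : Fin (m + 3)) (hl : l ≠ i) : x l < x i := by
  rw [splitEquiv_apply] at h
  obtain ⟨h0, h1, h2, h3⟩ := h
  dsimp only at *
  rcases Fin.eq_self_or_eq_succAbove i l with rfl | ⟨l', rfl⟩
  · exact absurd rfl hl
  rcases Fin.eq_self_or_eq_succAbove j l' with rfl | ⟨l'', rfl⟩
  · exact h1
  · exact (h3 l'').2

lemma mem_pre_min {m : ℕ} {i : Fin (m + 3)} {j : Fin (m + 2)} {x : Fin (m + 3) → ℝ}
    (h : splitEquiv m i j x ∈ region m) (l : Fin (m + 3)) (hl : l ≠ i.succAbove j) :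
    x (i.succAbove j) < x l := by
  rw [splitEquiv_apply] at h
  obtain ⟨h0, h1, h2, h3⟩ := h
  dsimp only at *
  rcases Fin.eq_self_or_eq_succAbove i l with rfl | ⟨l', rfl⟩
  · exact h1
  rcases Fin.eq_self_or_eq_succAbove j l' with rfl | ⟨l'', rfl⟩
  · exact absurd rfl hl
  · exact (h3 l'').1

lemma pre_disjoint (m : ℕ) : Pairwise (Function.onFun Disjoint
    (fun p : Fin (m + 3) × Fin (m + 2) => splitEquiv m p.1 p.2 ⁻¹' region m)) := by
  rintro ⟨i, j⟩ ⟨i', j'⟩ hne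
  refine Set.disjoint_left.2 fun x hx hx' => hne ?_
  simp only [Set.mem_preimage] at hx hx'
  have hi : i = i' := by
    by_contra h
    exact lt_asymm (mem_pre_max hx i' (Ne.symm h)) (mem_pre_max hx' i h)
  subst hi
  have hj : j = j' := by
    by_contra h
    have h2 : i.succAbove j ≠ i.succAbove j' := fun h' => h (Fin.succAbove_right_injective h')
    exact lt_asymm (mem_pre_min hx _ h2.symm) (mem_pre_min hx' _ h2)
  rw [hj]

lemma pre_subset_cube (m : ℕ) (i : Fin (m + 3)) (j : Fin (m + 2)) :
    splitEquiv m i j ⁻¹' region m ⊆ Set.univ.pi fun _ : Fin (m + 3) => Set.Ioo (0 : ℝ) 1 := by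
  intro x hx l _
  have hx' := hx
  rw [Set.mem_preimage, splitEquiv_apply] at hx'
  obtain ⟨h0, h1, h2, h3⟩ := hx'
  dsimp only at *
  constructor
  · by_cases hl : l = i.succAbove j
    · rw [hl]; exact h0
    · exact h0.trans (mem_pre_min hx l hl)
  · by_cases hl : l = i
    · rw [hl]; exact h2
    · exact (mem_pre_max hx l hl).trans h2

lemma ae_injective (n : ℕ) : ∀ᵐ x : Fin n → ℝ, Function.Injective x := by
  have : ∀ i j : Fin n, i ≠ j → ∀ᵐ x : Fin n → ℝ, x i ≠ x j := by
    intro i j hij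
    let s : Submodule ℝ (Fin n → ℝ) :=
      LinearMap.ker ((LinearMap.proj i : (Fin n → ℝ) →ₗ[ℝ] ℝ) - LinearMap.proj j)
    have hs : s ≠ ⊤ := by
      intro h
      have : Pi.single i (1 : ℝ) ∈ s := by rw [h]; trivial
      simp [s, LinearMap.mem_ker, hij.symm] at this
    have h0 := Measure.addHaar_submodule (volume : Measure (Fin n → ℝ)) s hs
    rw [ae_iff]
    convert h0 using 2
    ext x
    simp [s, LinearMap.mem_ker, sub_eq_zero]
  have h2 : ∀ᵐ x : Fin n → ℝ, ∀ i j : Fin n, i ≠ j → x i ≠ x j := by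
    rw [ae_all_iff]; intro i
    rw [ae_all_iff]; intro j
    by_cases h : i = j
    · simp [h]
    · simpa [h] using this i j h
  filter_upwards [h2] with x hx i j hij
  by_contra h
  exact hx i j h hij

lemma cube_ae (m : ℕ) : (Set.univ.pi fun _ : Fin (m + 3) => Set.Ioo (0 : ℝ) 1) =ᵐ[volume]
    ⋃ p : Fin (m + 3) × Fin (m + 2), splitEquiv m p.1 p.2 ⁻¹' region m := by
  filter_upwards [ae_injective (m + 3)] with x hx
  refine propext ⟨fun hc => ?_, fun hc => ?_⟩
  · obtain ⟨i, hi⟩ := Finite.exists_max x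
    obtain ⟨q, hq⟩ := Finite.exists_min x
    have hqi : q ≠ i := by
      rintro rfl
      have h1 : (0 : Fin (m + 3)) ≠ 1 := by simp
      exact h1 (hx (((hi 0).antisymm (hq 0)).trans ((hi 1).antisymm (hq 1)).symm))
    obtain ⟨j, rfl⟩ := (Fin.eq_self_or_eq_succAbove i q).resolve_left hqi
    refine Set.mem_iUnion.2 ⟨(i, j), ?_⟩
    rw [Set.mem_preimage, splitEquiv_apply]
    have hc' : ∀ l, x l ∈ Set.Ioo (0 : ℝ) 1 := fun l => hc l trivial
    refine ⟨(hc' _).1, (hi _).lt_of_ne fun h => hqi (hx h), (hc' _).2, fun l => ⟨?_, ?_⟩⟩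
    · refine (hq _).lt_of_ne fun h => ?_
      exact Fin.succAbove_ne j l (Fin.succAbove_right_injective (hx h)).symm
    · refine (hi _).lt_of_ne fun h => ?_
      exact Fin.succAbove_ne i _ (hx h)
  · obtain ⟨p, hp⟩ := Set.mem_iUnion.1 hc
    exact pre_subset_cube m _ _ hp

/-- The integrand in split coordinates. -/
noncomputable def hfun (m : ℕ) (p : ℝ × (ℝ × (Fin (m + 1) → ℝ))) : ℝ :=
  ((p.1 * (p.2.1 * ∏ l, p.2.2 l)) ^ (1 / ((m + 3 : ℕ) : ℝ)) - p.2.1) / (p.1 - p.2.1)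

lemma integrand_eq (m : ℕ) (i : Fin (m + 3)) (j : Fin (m + 2)) (x : Fin (m + 3) → ℝ)
    (hne : (Finset.univ : Finset (Fin (m + 3))).Nonempty)
    (hx : x ∈ splitEquiv m i j ⁻¹' region m) :
    ((∏ i, x i) ^ (1 / ((m + 3 : ℕ) : ℝ)) - Finset.univ.inf' hne x) /
      (Finset.univ.sup' hne x - Finset.univ.inf' hne x) = hfun m (splitEquiv m i j x) := by
  have h1 : Finset.univ.inf' hne x = x (i.succAbove j) := by
    refine le_antisymm (Finset.inf'_le _ (Finset.mem_univ _)) (Finset.le_inf' _ _ fun l _ => ?_)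
    by_cases hl : l = i.succAbove j
    · rw [hl]
    · exact (mem_pre_min hx l hl).le
  have h2 : Finset.univ.sup' hne x = x i := by
    refine le_antisymm (Finset.sup'_le _ _ fun l _ => ?_) (Finset.le_sup' _ (Finset.mem_univ _))
    by_cases hl : l = i
    · rw [hl]
    · exact (mem_pre_max hx l hl).le
  rw [h1, h2, splitEquiv_apply, hfun, Fin.prod_univ_succAbove _ i, Fin.prod_univ_succAbove _ j]

lemma hfun_bound (m : ℕ) (p : ℝ × (ℝ × (Fin (m + 1) → ℝ))) (hp : p ∈ region m) :
    ‖hfun m p‖ ≤ 1 := by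
  obtain ⟨b, a, z⟩ := p
  obtain ⟨h0, h1, h2, h3⟩ := hp
  dsimp only at *
  have hb : 0 < b := h0.trans h1
  have hz1 : a ^ (m + 1) ≤ ∏ l, z l := by
    have := Finset.prod_le_prod (s := Finset.univ) (f := fun _ : Fin (m + 1) => a) (g := z)
      (fun _ _ => h0.le) (fun l _ => (h3 l).1.le)
    simpa using this
  have hz2 : ∏ l, z l ≤ b ^ (m + 1) := by
    have := Finset.prod_le_prod (s := Finset.univ) (f := z) (g := fun _ : Fin (m + 1) => b)
      (fun l _ => (h0.trans (h3 l).1).le) (fun l _ => (h3 l).2.le)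
    simpa using this
  have hz0 : 0 < ∏ l, z l := lt_of_lt_of_le (by positivity) hz1
  have e1 : a ≤ (b * (a * ∏ l, z l)) ^ (1 / ((m + 3 : ℕ) : ℝ)) := by
    have := Real.pow_rpow_inv_natCast (n := m + 3) h0.le (by omega)
    rw [one_div]
    conv_lhs => rw [← this]
    refine Real.rpow_le_rpow (by positivity) ?_ (by positivity)
    calc a ^ (m + 3) = a * (a * a ^ (m + 1)) := by ring
      _ ≤ _ := by gcongr
  have e2 : (b * (a * ∏ l, z l)) ^ (1 / ((m + 3 : ℕ) : ℝ)) ≤ b := by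
    have := Real.pow_rpow_inv_natCast (n := m + 3) hb.le (by omega)
    rw [one_div]
    conv_rhs => rw [← this]
    refine Real.rpow_le_rpow (by positivity) ?_ (by positivity)
    calc _ ≤ b * (b * b ^ (m + 1)) := by gcongr
      _ = _ := by ring
  have hd : 0 < b - a := by linarith
  rw [hfun, Real.norm_eq_abs, abs_of_nonneg (div_nonneg (by linarith) hd.le), div_le_one hd]
  linarith

lemma measurable_hfun (m : ℕ) : Measurable (hfun m) := by
  unfold hfun
  fun_prop

lemma volume_region (m : ℕ) : volume (region m) ≠ ⊤ := by
  have h := (splitEquiv_mp m 0 0).measure_preimage (measurableSet_region m).nullMeasurableSet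
  rw [← h]
  refine ne_top_of_le_ne_top ?_ (measure_mono (pre_subset_cube m 0 0))
  rw [volume_pi_pi]
  simp

lemma integrableOn_hfun (m : ℕ) : IntegrableOn (hfun m) (region m) := by
  refine Measure.integrableOn_of_bounded (M := 1) (volume_region m)
    (measurable_hfun m).aestronglyMeasurable ?_
  exact (ae_restrict_iff' (measurableSet_region m)).2 (.of_forall (hfun_bound m))

lemma step1 (m : ℕ) (hne : (Finset.univ : Finset (Fin (m + 3))).Nonempty) :
    (∫ x in Set.univ.pi fun _ : Fin (m + 3) => Set.Ioo (0 : ℝ) 1,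
      ((∏ i, x i) ^ (1 / ((m + 3 : ℕ) : ℝ)) - Finset.univ.inf' hne x) /
      (Finset.univ.sup' hne x - Finset.univ.inf' hne x)) =
    ((m : ℝ) + 3) * (m + 2) * ∫ p in region m, hfun m p := by
  have hms : ∀ p : Fin (m + 3) × Fin (m + 2),
      MeasurableSet (splitEquiv m p.1 p.2 ⁻¹' region m) := fun p =>
    (splitEquiv m p.1 p.2).measurable (measurableSet_region m)
  rw [setIntegral_congr_set (cube_ae m), integral_iUnion_fintype hms (pre_disjoint m)]
  · have : ∀ p : Fin (m + 3) × Fin (m + 2),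
        ∫ x in splitEquiv m p.1 p.2 ⁻¹' region m,
          ((∏ i, x i) ^ (1 / ((m + 3 : ℕ) : ℝ)) - Finset.univ.inf' hne x) /
          (Finset.univ.sup' hne x - Finset.univ.inf' hne x) = ∫ p in region m, hfun m p := by
      intro p
      rw [setIntegral_congr_fun (hms p) (fun x hx => integrand_eq m p.1 p.2 x hne hx)]
      exact (splitEquiv_mp m p.1 p.2).setIntegral_preimage_emb
        (splitEquiv m p.1 p.2).measurableEmbedding _ _
    simp only [this]
    simp
  · intro p
    have := ((splitEquiv_mp m p.1 p.2).integrableOn_comp_preimage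
        (splitEquiv m p.1 p.2).measurableEmbedding).2 (integrableOn_hfun m)
    exact this.congr_fun (fun x hx => (integrand_eq m p.1 p.2 x hne hx).symm) (hms p)

/-- The integral over the intermediate coordinates. -/
noncomputable def Hfun (m : ℕ) (b a : ℝ) : ℝ :=
  ((b * a) ^ (1 / ((m + 3 : ℕ) : ℝ)) *
    ((b ^ (1 / ((m + 3 : ℕ) : ℝ) + 1) - a ^ (1 / ((m + 3 : ℕ) : ℝ) + 1)) /
      (1 / ((m + 3 : ℕ) : ℝ) + 1)) ^ (m + 1) - a * (b - a) ^ (m + 1)) / (b - a)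

lemma inner_z (m : ℕ) (a b : ℝ) (ha : 0 < a) (hab : a < b) :
    ∫ z in Set.univ.pi fun _ : Fin (m + 1) => Set.Ioo a b, hfun m (b, a, z) = Hfun m b a := by
  have hr : (0 : ℝ) < 1 / ((m + 3 : ℕ) : ℝ) := by positivity
  unfold Hfun
  set r : ℝ := 1 / ((m + 3 : ℕ) : ℝ) with hrdef
  have hms : MeasurableSet (Set.univ.pi fun _ : Fin (m + 1) => Set.Ioo a b) :=
    MeasurableSet.univ_pi fun _ => measurableSet_Ioo
  have h1 : ∀ z ∈ (Set.univ.pi fun _ : Fin (m + 1) => Set.Ioo a b),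
      hfun m (b, a, z) = ((b * a) ^ r * ∏ l, z l ^ r - a) / (b - a) := by
    intro z hz
    have hz' : ∀ l, 0 ≤ z l := fun l => (ha.trans (hz l trivial).1).le
    simp only [hfun, ← hrdef]
    rw [← mul_assoc, Real.mul_rpow (mul_pos (ha.trans hab) ha).le
      (Finset.prod_nonneg fun l _ => hz' l), Real.finsetProd_rpow _ _ fun l _ => hz' l]
  rw [setIntegral_congr_fun hms h1]
  have hv : (volume : Measure (Fin (m + 1) → ℝ)).restrict
      (Set.univ.pi fun _ : Fin (m + 1) => Set.Ioo a b) =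
      Measure.pi fun _ => (volume : Measure ℝ).restrict (Set.Ioo a b) := by
    rw [volume_pi, Measure.restrict_pi_pi]
  rw [hv, integral_div]
  have hint : IntegrableOn (fun x : ℝ => x ^ r) (Set.Ioo a b) := by
    refine IntegrableOn.mono_set (t := Set.Icc a b) ?_ Set.Ioo_subset_Icc_self
    refine ContinuousOn.integrableOn_Icc ?_
    exact (Real.continuous_rpow_const hr.le).continuousOn
  have hint2 : Integrable (fun z : Fin (m + 1) → ℝ => ∏ l, z l ^ r)
      (Measure.pi fun _ => (volume : Measure ℝ).restrict (Set.Ioo a b)) :=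
    Integrable.fintype_prod (f := fun _ x => x ^ r) fun _ => hint
  rw [integral_sub (hint2.const_mul _) (integrable_const _), integral_const_mul,
    integral_fintype_prod_eq_pow (fun x : ℝ => x ^ r), ← integral_Ioc_eq_integral_Ioo,
    ← intervalIntegral.integral_of_le hab.le, integral_rpow (Or.inl (by linarith))]
  congr 2
  · simp
  · rw [integral_const, ← hv]
    simp [Measure.real, Real.volume_pi_Ioo, hab.le, mul_comm]

/-- The one-variable function obtained after the substitution. -/
noncomputable def Kfun (m : ℕ) (u : ℝ) : ℝ :=
  ((m : ℝ) + 3) * (((m : ℝ) + 3) / (m + 3 + 1)) ^ (m + 1) *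
      (u ^ (m + 3) * (1 - u ^ (m + 4)) ^ (m + 1) / (1 - u ^ (m + 3))) -
    ((m : ℝ) + 3) * u ^ (m + 2) * (u ^ (m + 3) * (1 - u ^ (m + 3)) ^ m)

lemma Hfun_subst (m : ℕ) (b u : ℝ) (hb : 0 < b) (hu : u ∈ Set.Ioo (0 : ℝ) 1) :
    |b * (((m + 3 : ℕ) : ℝ) * u ^ (m + 2))| • Hfun m b (b * u ^ (m + 3)) =
      b ^ (m + 2) * Kfun m u := by
  obtain ⟨hu0, hu1⟩ := hu
  have hn : ((m + 3 : ℕ) : ℝ) ≠ 0 := by positivity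
  obtain ⟨t, ht, rfl⟩ : ∃ t : ℝ, 0 < t ∧ b = t ^ (m + 3) :=
    ⟨b ^ (((m + 3 : ℕ) : ℝ)⁻¹), by positivity,
      (Real.rpow_inv_natCast_pow hb.le (by omega)).symm⟩
  have key : ∀ s : ℝ, 0 < s → (s ^ (m + 3)) ^ (1 / ((m + 3 : ℕ) : ℝ)) = s := by
    intro s hs
    rw [one_div]
    exact Real.pow_rpow_inv_natCast hs.le (by omega)
  have e1 : (t ^ (m + 3) * (t ^ (m + 3) * u ^ (m + 3))) ^ (1 / ((m + 3 : ℕ) : ℝ)) = t ^ 2 * u := by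
    rw [← key (t ^ 2 * u) (by positivity)]
    congr 1
    ring
  have key2 : ∀ s : ℝ, 0 < s → (s ^ (m + 3)) ^ (1 / ((m + 3 : ℕ) : ℝ) + 1) = s ^ (m + 4) := by
    intro s hs
    rw [Real.rpow_add (by positivity), key s hs, Real.rpow_one]
    ring
  have hw : 0 < 1 - u ^ (m + 3) := by
    have := pow_lt_one₀ hu0.le hu1 (n := m + 3) (by omega)
    linarith
  rw [abs_of_pos (by positivity), Hfun, e1, ← mul_pow, key2 t ht, key2 (t * u) (by positivity),
    Kfun, smul_eq_mul]
  have e2 : (t ^ (m + 4) - (t * u) ^ (m + 4)) / (1 / ((m + 3 : ℕ) : ℝ) + 1) =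
      t ^ (m + 4) * (1 - u ^ (m + 4)) * (((m : ℝ) + 3) / (m + 3 + 1)) := by
    have : (m : ℝ) + 3 + 1 ≠ 0 := by positivity
    have : (1 : ℝ) + (m + 3) ≠ 0 := by positivity
    push_cast
    field_simp
    ring
  have e3 : t ^ (m + 3) - (t * u) ^ (m + 3) = t ^ (m + 3) * (1 - u ^ (m + 3)) := by
    rw [mul_pow]; ring
  rw [e2, e3]
  generalize hW : 1 - u ^ (m + 3) = w at *
  generalize 1 - u ^ (m + 4) = v at *
  generalize ((m : ℝ) + 3) / (m + 3 + 1) = c at *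
  have hw' : w ≠ 0 := hw.ne'
  have ht' : t ≠ 0 := ht.ne'
  push_cast
  rw [mul_pow, mul_pow, mul_pow, mul_pow]
  field_simp
  ring

lemma inner_a (m : ℕ) (b : ℝ) (hb : 0 < b) :
    ∫ a in Set.Ioo 0 b, Hfun m b a = b ^ (m + 2) * ∫ u in Set.Ioo (0 : ℝ) 1, Kfun m u := by
  have himg : (fun u : ℝ => b * u ^ (m + 3)) '' Set.Ioo 0 1 = Set.Ioo 0 b := by
    ext y
    constructor
    · rintro ⟨u, ⟨h0, h1⟩, rfl⟩
      have := pow_lt_one₀ h0.le h1 (n := m + 3) (by omega)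
      constructor
      · dsimp only; positivity
      · dsimp only; nlinarith
    · rintro ⟨h0, h1⟩
      refine ⟨(y / b) ^ (((m + 3 : ℕ) : ℝ)⁻¹), ⟨by positivity, ?_⟩, ?_⟩
      · exact Real.rpow_lt_one (by positivity) ((div_lt_one hb).2 h1) (by positivity)
      · dsimp only
        rw [Real.rpow_inv_natCast_pow (by positivity) (by omega)]
        field_simp
  have hinj : Set.InjOn (fun u : ℝ => b * u ^ (m + 3)) (Set.Ioo 0 1) := by
    intro u hu v hv h
    have h' : u ^ (m + 3) = v ^ (m + 3) := mul_left_cancel₀ hb.ne' h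
    exact (pow_left_inj₀ hu.1.le hv.1.le (by omega)).1 h'
  have hder : ∀ u ∈ Set.Ioo (0 : ℝ) 1, HasDerivWithinAt (fun u : ℝ => b * u ^ (m + 3))
      (b * (((m + 3 : ℕ) : ℝ) * u ^ (m + 2))) (Set.Ioo 0 1) u := fun u _ =>
    ((hasDerivAt_pow (m + 3) u).const_mul b).hasDerivWithinAt
  rw [← himg, integral_image_eq_integral_abs_deriv_smul measurableSet_Ioo hder hinj,
    setIntegral_congr_fun measurableSet_Ioo (fun u hu => Hfun_subst m b u hb hu),
    integral_const_mul]

lemma indicator_z (m : ℕ) (b a : ℝ) :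
    ∫ z, (region m).indicator (hfun m) (b, a, z) =
      (Set.Ioo (0 : ℝ) 1).indicator
        (fun b => (Set.Ioo 0 b).indicator (fun a => Hfun m b a) a) b := by
  by_cases h : 0 < a ∧ a < b ∧ b < 1
  · obtain ⟨h0, h1, h2⟩ := h
    rw [Set.indicator_of_mem (show b ∈ Set.Ioo (0 : ℝ) 1 from ⟨h0.trans h1, h2⟩),
      Set.indicator_of_mem (show a ∈ Set.Ioo 0 b from ⟨h0, h1⟩), ← inner_z m a b h0 h1,
      ← integral_indicator (MeasurableSet.univ_pi fun _ => measurableSet_Ioo)]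
    congr 1
    ext z
    have : (b, a, z) ∈ region m ↔ z ∈ Set.univ.pi fun _ : Fin (m + 1) => Set.Ioo a b := by
      simp [region, h0, h1, h2, Set.mem_pi]
    by_cases hz : (b, a, z) ∈ region m
    · rw [Set.indicator_of_mem hz, Set.indicator_of_mem (this.1 hz)]
    · rw [Set.indicator_of_notMem hz, Set.indicator_of_notMem (fun h => hz (this.2 h))]
  · have h1 : ∀ z, (region m).indicator (hfun m) (b, a, z) = 0 := fun z =>
      Set.indicator_of_notMem (fun hm => h ⟨hm.1, hm.2.1, hm.2.2.1⟩) _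
    simp only [h1, integral_zero]
    symm
    by_cases hb : b ∈ Set.Ioo (0 : ℝ) 1
    · rw [Set.indicator_of_mem hb]
      exact Set.indicator_of_notMem (fun ha => h ⟨ha.1, ha.2, hb.2⟩) _
    · exact Set.indicator_of_notMem hb _

lemma step2 (m : ℕ) : ∫ p in region m, hfun m p =
    1 / ((m : ℝ) + 3) * ∫ u in Set.Ioo (0 : ℝ) 1, Kfun m u := by
  have hI : Integrable ((region m).indicator (hfun m)) (volume.prod (volume.prod volume)) :=
    (integrableOn_hfun m).integrable_indicator (measurableSet_region m)
  rw [← integral_indicator (measurableSet_region m)]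
  have e0 : ∫ p, (region m).indicator (hfun m) p =
      ∫ b, ∫ q, (region m).indicator (hfun m) (b, q) := integral_prod _ hI
  have e1 : ∫ b, ∫ q, (region m).indicator (hfun m) (b, q) =
      ∫ b, (Set.Ioo (0 : ℝ) 1).indicator
        (fun b => b ^ (m + 2) * ∫ u in Set.Ioo (0 : ℝ) 1, Kfun m u) b := by
    refine integral_congr_ae ?_
    filter_upwards [hI.prod_right_ae] with b hb
    have : ∫ q, (region m).indicator (hfun m) (b, q) =
        ∫ a, ∫ z, (region m).indicator (hfun m) (b, a, z) := integral_prod _ hb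
    rw [this]
    simp only [indicator_z]
    by_cases hb : b ∈ Set.Ioo (0 : ℝ) 1
    · simp only [Set.indicator_of_mem hb]
      rw [integral_indicator measurableSet_Ioo, inner_a m b hb.1]
    · simp [Set.indicator_of_notMem hb]
  rw [e0, e1, integral_indicator measurableSet_Ioo, integral_mul_const,
    ← integral_Ioc_eq_integral_Ioo, ← intervalIntegral.integral_of_le zero_le_one, integral_pow]
  congr 1
  push_cast
  simp
  ring

lemma step3 (m : ℕ) : ∫ u in Set.Ioo (0 : ℝ) 1, Kfun m u =
    ((m : ℝ) + 3) * (((m : ℝ) + 3) / (m + 3 + 1)) ^ (m + 1) *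
      (∫ u in Set.Ioo (0 : ℝ) 1,
        u ^ (m + 3) * (1 - u ^ (m + 4)) ^ (m + 1) / (1 - u ^ (m + 3))) -
    1 / (((m : ℝ) + 1) * (m + 2)) := by
  have hI1 : IntegrableOn (fun u : ℝ =>
      u ^ (m + 3) * (1 - u ^ (m + 4)) ^ (m + 1) / (1 - u ^ (m + 3))) (Set.Ioo 0 1) := by
    refine Measure.integrableOn_of_bounded (M := 2) (by simp)
      (Measurable.aestronglyMeasurable (by fun_prop)) ?_
    refine (ae_restrict_iff' measurableSet_Ioo).2 (.of_forall fun u hu => ?_)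
    obtain ⟨h0, h1⟩ := hu
    have p1 : u ^ (m + 3) < 1 := pow_lt_one₀ h0.le h1 (by omega)
    have p2 : u ^ (m + 4) < 1 := pow_lt_one₀ h0.le h1 (by omega)
    have p3 : u ^ (m + 3) ≤ u := by
      calc u ^ (m + 3) ≤ u ^ 1 := pow_le_pow_of_le_one h0.le h1.le (by omega)
        _ = u := pow_one u
    have p4 : 0 < u ^ (m + 3) := by positivity
    have p5 : 0 < u ^ (m + 4) := by positivity
    have p6 : u ^ (m + 4) = u ^ (m + 3) * u := pow_succ _ _
    have p7 : (1 - u ^ (m + 4)) ^ m ≤ 1 := pow_le_one₀ (by linarith) (by linarith)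
    have p8 : 0 ≤ (1 - u ^ (m + 4)) ^ m := pow_nonneg (by linarith) _
    rw [Real.norm_eq_abs, abs_of_nonneg (div_nonneg (mul_nonneg p4.le
      (pow_nonneg (by linarith) _)) (by linarith)), div_le_iff₀ (by linarith)]
    calc u ^ (m + 3) * (1 - u ^ (m + 4)) ^ (m + 1)
        = u ^ (m + 3) * ((1 - u ^ (m + 4)) ^ m * (1 - u ^ (m + 4))) := by
          rw [pow_succ (1 - u ^ (m + 4)) m]
      _ ≤ 1 * (1 * (1 - u ^ (m + 4))) := by gcongr <;> linarith
      _ ≤ 2 * (1 - u ^ (m + 3)) := by rw [p6]; nlinarith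
  have hc : Continuous (fun u : ℝ =>
      ((m : ℝ) + 3) * u ^ (m + 2) * (u ^ (m + 3) * (1 - u ^ (m + 3)) ^ m)) := by fun_prop
  have hI2 : IntegrableOn (fun u : ℝ =>
      ((m : ℝ) + 3) * u ^ (m + 2) * (u ^ (m + 3) * (1 - u ^ (m + 3)) ^ m)) (Set.Ioo 0 1) :=
    (hc.integrableOn_Icc (a := 0) (b := 1)).mono_set Set.Ioo_subset_Icc_self
  unfold Kfun
  rw [integral_sub (hI1.const_mul _) hI2, integral_const_mul]
  congr 1
  rw [← integral_Ioc_eq_integral_Ioo, ← intervalIntegral.integral_of_le zero_le_one]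
  rw [intervalIntegral.integral_eq_sub_of_hasDerivAt (f := fun u : ℝ =>
    (1 - u ^ (m + 3)) ^ (m + 2) / ((m : ℝ) + 2) - (1 - u ^ (m + 3)) ^ (m + 1) / ((m : ℝ) + 1))
    ?_ (hc.intervalIntegrable _ _)]
  · have : (m : ℝ) + 1 ≠ 0 := by positivity
    have : (m : ℝ) + 2 ≠ 0 := by positivity
    simp
    field_simp
    ring
  · intro u _
    have h1 : (m : ℝ) + 1 ≠ 0 := by positivity
    have h2 : (m : ℝ) + 2 ≠ 0 := by positivity
    have hd := (hasDerivAt_pow (m + 3) u).const_sub 1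
    convert ((hd.pow (m + 2)).div_const ((m : ℝ) + 2)).sub
      ((hd.pow (m + 1)).div_const ((m : ℝ) + 1)) using 1
    · rfl
    simp only [Nat.add_sub_cancel, show m + 3 - 1 = m + 2 by omega,
      show m + 2 - 1 = m + 1 by omega]
    push_cast
    field_simp
    ring

end OrnessGM

/-- For `n ≥ 3`, the orness average value over `[0,1]^n` of the geometric mean
`G(x) = (∏ᵢ xᵢ)^{1/n}` equals
`n(n−1)(n/(n+1))^{n−2} ∫_0^1 xⁿ(1−x^{n+1})^{n−2}/(1−xⁿ) dx − 1/(n−2)`. -/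
theorem orness_average_geometric_mean (n : ℕ) (hn : 3 ≤ n) :
    (∫ x in Set.univ.pi fun _ : Fin n => Set.Ioo (0 : ℝ) 1,
        ((∏ i : Fin n, x i) ^ (1 / (n : ℝ)) -
            Finset.univ.inf' ⟨⟨0, by omega⟩, Finset.mem_univ _⟩ x) /
          (Finset.univ.sup' ⟨⟨0, by omega⟩, Finset.mem_univ _⟩ x -
            Finset.univ.inf' ⟨⟨0, by omega⟩, Finset.mem_univ _⟩ x))
      = (n : ℝ) * ((n : ℝ) - 1) * ((n : ℝ) / ((n : ℝ) + 1)) ^ (n - 2) *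
            (∫ x in Set.Ioo (0 : ℝ) 1, x ^ n * (1 - x ^ (n + 1)) ^ (n - 2) / (1 - x ^ n)) -
          1 / ((n : ℝ) - 2) := by
  obtain ⟨m, rfl⟩ : ∃ m, n = m + 3 := ⟨n - 3, by omega⟩
  refine (OrnessGM.step1 m ⟨⟨0, by omega⟩, Finset.mem_univ _⟩).trans ?_
  rw [OrnessGM.step2, OrnessGM.step3]
  simp only [show m + 3 - 2 = m + 1 by omega, show m + 3 + 1 = m + 4 by omega]
  generalize (∫ u in Set.Ioo (0 : ℝ) 1,
        u ^ (m + 3) * (1 - u ^ (m + 4)) ^ (m + 1) / (1 - u ^ (m + 3))) = I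
  push_cast
  have h1 : (m : ℝ) + 1 ≠ 0 := by positivity
  have h2 : (m : ℝ) + 2 ≠ 0 := by positivity
  have h3 : (m : ℝ) + 3 ≠ 0 := by positivity
  have e1 : (m : ℝ) + 3 - 1 = m + 2 := by ring
  have e2 : (m : ℝ) + 3 - 2 = m + 1 := by ring
  rw [e1, e2]
  generalize (((m : ℝ) + 3) / (m + 3 + 1)) ^ (m + 1) = c
  field_simp
end

section
/- Let n ≥ 2 and let a : 2^{{1,…,n}} → ℝ be a set function with a(∅) = 0 and Σ_{S ⊆ {1,…,n}} a(S) = 1, chosen so that C_a(x) = Σ_{S ⊆ {1,…,n}} a(S) min_{i ∈ S} x_i is nondecreasing in each variable (a discrete Choquet integral). Then the orness average value of C_a over [0,1]^n equals (1/(n−1)) Σ_{S ⊆ {1,…,n}} a(S) (n − |S|)/(|S| + 1). -/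
open MeasureTheory

/-- The discrete Choquet integral (Lovász extension) associated with a set function
`a : 2^{[n]} → ℝ`: `C_a(x) = Σ_{S ⊆ [n]} a(S) min_{i ∈ S} x_i`, with the convention that
the term for `S = ∅` contributes `0`. -/
noncomputable def choquet {n : ℕ} (a : Finset (Fin n) → ℝ) (x : Fin n → ℝ) : ℝ :=
  ∑ S : Finset (Fin n), a S * (if h : S.Nonempty then S.inf' h x else 0)

/-- The open unit cube. -/
abbrev oCube (ι : Type*) : Set (ι → ℝ) := Set.univ.pi fun _ => Set.Ioo (0 : ℝ) 1

lemma oCube_meas (ι : Type*) [Fintype ι] : MeasurableSet (oCube ι) :=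
  MeasurableSet.univ_pi fun _ => measurableSet_Ioo

lemma oCube_vol (ι : Type*) [Fintype ι] : volume (oCube ι) = 1 := by
  simp [oCube, volume_pi_pi]

lemma o_prob (ι : Type*) [Fintype ι] : IsProbabilityMeasure (volume.restrict (oCube ι)) :=
  ⟨by simp [oCube_vol]⟩

lemma o_bdd {α : Type*} [MeasurableSpace α] {μ : Measure α} [IsFiniteMeasure μ] {f : α → ℝ}
    (hf : Measurable f) (C : ℝ) (h : ∀ x, |f x| ≤ C) : Integrable f μ :=
  Integrable.of_bound hf.aestronglyMeasurable C (Filter.Eventually.of_forall h)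

lemma o_meas_sup {ι : Type*} [Fintype ι] (s : Finset ι) (h : s.Nonempty) :
    Measurable fun x : ι → ℝ => s.sup' h x :=
  (Continuous.finset_sup'_apply (f := fun i (x : ι → ℝ) => x i) h
    fun i _ => continuous_apply i).measurable

lemma o_meas_inf {ι : Type*} [Fintype ι] (s : Finset ι) (h : s.Nonempty) :
    Measurable fun x : ι → ℝ => s.inf' h x :=
  (Continuous.finset_inf'_apply (f := fun i (x : ι → ℝ) => x i) h
    fun i _ => continuous_apply i).measurable

lemma o_sup_mem {ι : Type*} (s : Finset ι) (h : s.Nonempty) {x : ι → ℝ}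
    (hx : x ∈ oCube ι) : s.sup' h x ∈ Set.Ioo (0 : ℝ) 1 := by
  obtain ⟨i, _, hi⟩ := s.exists_mem_eq_sup' h x
  rw [hi]; exact hx i trivial

lemma o_inf_mem {ι : Type*} (s : Finset ι) (h : s.Nonempty) {x : ι → ℝ}
    (hx : x ∈ oCube ι) : s.inf' h x ∈ Set.Ioo (0 : ℝ) 1 := by
  obtain ⟨i, _, hi⟩ := s.exists_mem_eq_inf' h x
  rw [hi]; exact hx i trivial

section
open scoped Pointwise

/-- Key identity: weight `1 - max` for scale invariant functions. -/
lemma o_key {ι : Type*} [Fintype ι] [Nonempty ι] (G : (ι → ℝ) → ℝ) (hG : Measurable G)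
    (hb : ∀ x, |G x| ≤ 1) (hs : ∀ (c : ℝ) (x : ι → ℝ), 0 < c → G (c • x) = G x) :
    ∫ x in oCube ι, G x * (1 - Finset.univ.sup' Finset.univ_nonempty x)
      = (∫ x in oCube ι, G x) / (Fintype.card ι + 1) := by
  have := o_prob ι
  let F : (ι → ℝ) → ℝ → ℝ := fun x c =>
    (Set.Ioi (Finset.univ.sup' Finset.univ_nonempty x)).indicator (fun _ => G x) c
  have hF : Integrable (Function.uncurry F)
      ((volume.restrict (oCube ι)).prod (volume.restrict (Set.Ioo (0 : ℝ) 1))) := by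
    have : Function.uncurry F = Set.indicator
        {p : (ι → ℝ) × ℝ | Finset.univ.sup' Finset.univ_nonempty p.1 < p.2}
        (fun p => G p.1) := by
      ext ⟨x, c⟩
      simp [F, Set.indicator, Function.uncurry]
    rw [this]
    refine (o_bdd (hG.comp measurable_fst) 1 fun p => hb p.1).indicator ?_
    exact measurableSet_lt ((o_meas_sup _ Finset.univ_nonempty).comp measurable_fst) measurable_snd
  have h1 := integral_integral_swap hF
  have hL : ∫ x in oCube ι, ∫ c in Set.Ioo (0 : ℝ) 1, F x c
      = ∫ x in oCube ι, G x * (1 - Finset.univ.sup' Finset.univ_nonempty x) := by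
    refine setIntegral_congr_fun (oCube_meas ι) fun x hx => ?_
    have hm := o_sup_mem Finset.univ Finset.univ_nonempty hx
    simp only [F]
    rw [setIntegral_indicator measurableSet_Ioi, setIntegral_const]
    have : Set.Ioo (0 : ℝ) 1 ∩ Set.Ioi (Finset.univ.sup' Finset.univ_nonempty x)
        = Set.Ioo (Finset.univ.sup' Finset.univ_nonempty x) 1 := by
      ext c
      simp only [Set.mem_inter_iff, Set.mem_Ioo, Set.mem_Ioi]
      constructor
      · rintro ⟨⟨_, h⟩, h'⟩; exact ⟨h', h⟩
      · rintro ⟨h', h⟩; exact ⟨⟨hm.1.trans h', h⟩, h'⟩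
    rw [this, Real.volume_real_Ioo_of_le hm.2.le, smul_eq_mul, mul_comm]
  have hR : ∫ c in Set.Ioo (0 : ℝ) 1, ∫ x in oCube ι, F x c
      = ∫ c in Set.Ioo (0 : ℝ) 1, c ^ Fintype.card ι * ∫ x in oCube ι, G x := by
    refine setIntegral_congr_fun measurableSet_Ioo fun c hc => ?_
    have h2 : ∀ x, F x c =
        Set.indicator {x : ι → ℝ | Finset.univ.sup' Finset.univ_nonempty x < c} G x := by
      intro x
      simp [F, Set.indicator]
    simp only [h2]
    rw [setIntegral_indicator (measurableSet_lt (o_meas_sup _ _) measurable_const)]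
    have h3 : oCube ι ∩ {x : ι → ℝ | Finset.univ.sup' Finset.univ_nonempty x < c}
        = c • oCube ι := by
      ext x
      rw [Set.mem_smul_set_iff_inv_smul_mem₀ hc.1.ne']
      simp only [Set.mem_inter_iff, Set.mem_pi, Set.mem_univ, Set.mem_Ioo, true_imp_iff,
        Set.mem_setOf_eq, Finset.sup'_lt_iff, Finset.mem_univ, Pi.smul_apply, smul_eq_mul,
        ← forall_and]
      refine forall_congr' fun i => ?_
      rw [inv_mul_lt_iff₀ hc.1, mul_one]
      have : 0 < c⁻¹ * x i ↔ 0 < x i := mul_pos_iff_of_pos_left (inv_pos.2 hc.1)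
      rw [this]
      have := hc.2
      constructor
      · rintro ⟨⟨h, _⟩, h'⟩; exact ⟨h, h'⟩
      · rintro ⟨h, h'⟩; exact ⟨⟨h, by linarith⟩, h'⟩
    rw [h3]
    have h4 := Measure.setIntegral_comp_smul_of_pos (volume : Measure (ι → ℝ)) G (oCube ι) hc.1
    simp only [hs c _ hc.1, Module.finrank_fintype_fun_eq_card, smul_eq_mul] at h4
    rw [h4, mul_inv_cancel_left₀ (pow_pos hc.1 _).ne']
  rw [hL, hR, integral_mul_const, ← integral_Ioc_eq_integral_Ioo,
    ← intervalIntegral.integral_of_le zero_le_one, integral_pow] at h1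
  rw [h1]
  simp
  ring

end

lemma o_refl {ι : Type*} [Fintype ι] (f : (ι → ℝ) → ℝ) :
    ∫ x in oCube ι, f (1 - x) = ∫ x in oCube ι, f x := by
  have h := (Measure.measurePreserving_sub_left (volume : Measure (ι → ℝ)) 1).setIntegral_preimage_emb
    (MeasurableEquiv.subLeft (1 : ι → ℝ)).measurableEmbedding f (oCube ι)
  rw [← h]
  congr 2
  ext x
  simp [and_comm]

lemma o_sup_refl {ι : Type*} (s : Finset ι) (h : s.Nonempty) (x : ι → ℝ) :
    s.sup' h (1 - x) = 1 - s.inf' h x := by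
  apply le_antisymm
  · refine Finset.sup'_le h _ fun i hi => ?_
    have := Finset.inf'_le x hi
    simp only [Pi.sub_apply, Pi.one_apply]; linarith
  · obtain ⟨i, hi, he⟩ := s.exists_mem_eq_inf' h x
    rw [he]
    exact Finset.le_sup' (1 - x) hi

/-- Reflected version. -/
lemma o_key' {ι : Type*} [Fintype ι] [Nonempty ι] (G : (ι → ℝ) → ℝ) (hG : Measurable G)
    (hb : ∀ x, |G x| ≤ 1)
    (hs : ∀ (c : ℝ) (x : ι → ℝ), 0 < c → G (1 - c • x) = G (1 - x)) :
    ∫ x in oCube ι, G x * Finset.univ.inf' Finset.univ_nonempty x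
      = (∫ x in oCube ι, G x) / (Fintype.card ι + 1) := by
  have h := o_key (fun x => G (1 - x)) (hG.comp (measurable_const.sub measurable_id))
    (fun x => hb _) hs
  rw [o_refl G] at h
  rw [← h, ← o_refl]
  congr 1
  ext x
  have := o_sup_refl Finset.univ Finset.univ_nonempty (1 - x)
  rw [sub_sub_cancel] at this
  rw [this]; ring

lemma o_min {ι : Type*} [Fintype ι] [Nonempty ι] :
    ∫ x in oCube ι, Finset.univ.inf' Finset.univ_nonempty x
      = 1 / ((Fintype.card ι : ℝ) + 1) := by
  have h := o_key' (ι := ι) (fun _ => 1) measurable_const (by simp) (by simp)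
  simpa [Measure.real, oCube_vol] using h

lemma o_min_sub {ι : Type*} [Fintype ι] (S : Finset ι) (hS : S.Nonempty) :
    ∫ x in oCube ι, S.inf' hS x = 1 / ((S.card : ℝ) + 1) := by
  have : Nonempty S := hS.to_subtype
  have : IsProbabilityMeasure ((volume : Measure ℝ).restrict (Set.Ioo 0 1)) := ⟨by simp⟩
  have h1 : ∀ (κ : Type _) [Fintype κ], volume.restrict (oCube κ) =
      Measure.pi fun _ : κ => (volume : Measure ℝ).restrict (Set.Ioo 0 1) := by
    intro κ _
    rw [volume_pi, Measure.restrict_pi_pi]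
  have h := o_min (ι := S)
  rw [h1, ← integral_restrict_infinitePi
    (μ := fun _ : ι => (volume : Measure ℝ).restrict (Set.Ioo 0 1))
    (o_meas_inf _ _).aestronglyMeasurable, Measure.infinitePi_eq_pi, ← h1] at h
  rw [Fintype.card_coe] at h
  rw [← h]
  congr 1
  ext x
  apply le_antisymm
  · refine Finset.le_inf' _ _ fun i _ => Finset.inf'_le x i.2
  · refine Finset.le_inf' _ _ fun i hi => ?_
    exact Finset.inf'_le (S.restrict x) (Finset.mem_univ (⟨i, hi⟩ : S))

lemma o_inf_aff {ι : Type*} (s : Finset ι) (h : s.Nonempty) (x : ι → ℝ) (c d : ℝ) (hc : 0 < c) :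
    s.inf' h (fun i => c * x i + d) = c * s.inf' h x + d := by
  apply le_antisymm
  · obtain ⟨i, hi, he⟩ := s.exists_mem_eq_inf' h x
    rw [he]
    exact Finset.inf'_le (fun i => c * x i + d) hi
  · refine Finset.le_inf' h _ fun i hi => ?_
    have := mul_le_mul_of_nonneg_left (Finset.inf'_le x hi) hc.le
    linarith

lemma o_sup_aff {ι : Type*} (s : Finset ι) (h : s.Nonempty) (x : ι → ℝ) (c d : ℝ) (hc : 0 < c) :
    s.sup' h (fun i => c * x i + d) = c * s.sup' h x + d := by
  apply le_antisymm
  · refine Finset.sup'_le h _ fun i hi => ?_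
    have := mul_le_mul_of_nonneg_left (Finset.le_sup' x hi) hc.le
    linarith
  · obtain ⟨i, hi, he⟩ := s.exists_mem_eq_sup' h x
    rw [he]
    exact Finset.le_sup' (fun i => c * x i + d) hi

/-- The orness distribution function of the minimum over `S`. -/
noncomputable def oG {ι : Type*} [Fintype ι] [Nonempty ι] (S : Finset ι) (hS : S.Nonempty)
    (x : ι → ℝ) : ℝ :=
  (S.inf' hS x - Finset.univ.inf' Finset.univ_nonempty x) /
    (Finset.univ.sup' Finset.univ_nonempty x - Finset.univ.inf' Finset.univ_nonempty x)

section
variable {ι : Type*} [Fintype ι] [Nonempty ι] (S : Finset ι) (hS : S.Nonempty)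

lemma oG_meas : Measurable (oG S hS) :=
  ((o_meas_inf _ _).sub (o_meas_inf _ _)).div ((o_meas_sup _ _).sub (o_meas_inf _ _))

lemma oG_aff (c d : ℝ) (hc : 0 < c) (x : ι → ℝ) : oG S hS (fun i => c * x i + d) = oG S hS x := by
  unfold oG
  rw [o_inf_aff _ _ _ _ _ hc, o_inf_aff _ _ _ _ _ hc, o_sup_aff _ _ _ _ _ hc,
    add_sub_add_right_eq_sub, add_sub_add_right_eq_sub, ← mul_sub, ← mul_sub,
    mul_div_mul_left _ _ hc.ne']

lemma oG_ord (x : ι → ℝ) : Finset.univ.inf' Finset.univ_nonempty x ≤ S.inf' hS x ∧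
    S.inf' hS x ≤ Finset.univ.sup' Finset.univ_nonempty x := by
  refine ⟨Finset.inf'_mono x (Finset.subset_univ S) hS, ?_⟩
  obtain ⟨i, hi⟩ := hS
  exact (Finset.inf'_le x hi).trans (Finset.le_sup' x (Finset.mem_univ i))

lemma oG_bdd (x : ι → ℝ) : |oG S hS x| ≤ 1 := by
  obtain ⟨h1, h2⟩ := oG_ord S hS x
  unfold oG
  rw [abs_of_nonneg (div_nonneg (by linarith) (by linarith))]
  exact div_le_one_of_le₀ (by linarith) (by linarith)

lemma oG_mul (x : ι → ℝ) : oG S hS x * (Finset.univ.sup' Finset.univ_nonempty x -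
    Finset.univ.inf' Finset.univ_nonempty x) =
    S.inf' hS x - Finset.univ.inf' Finset.univ_nonempty x := by
  obtain ⟨h1, h2⟩ := oG_ord S hS x
  unfold oG
  refine div_mul_cancel_of_imp fun h => ?_
  linarith

lemma o_int_inf : IntegrableOn (fun x : ι → ℝ => S.inf' hS x) (oCube ι) := by
  have := o_prob ι
  refine Integrable.of_bound (o_meas_inf _ _).aestronglyMeasurable 1 ?_
  filter_upwards [ae_restrict_mem (oCube_meas ι)] with x hx
  have := o_inf_mem S hS hx
  rw [Real.norm_eq_abs, abs_of_pos this.1]; exact this.2.le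

lemma o_int_sup : IntegrableOn (fun x : ι → ℝ => S.sup' hS x) (oCube ι) := by
  have := o_prob ι
  refine Integrable.of_bound (o_meas_sup _ _).aestronglyMeasurable 1 ?_
  filter_upwards [ae_restrict_mem (oCube_meas ι)] with x hx
  have := o_sup_mem S hS hx
  rw [Real.norm_eq_abs, abs_of_pos this.1]; exact this.2.le

lemma oG_int : IntegrableOn (oG S hS) (oCube ι) := by
  have := o_prob ι
  exact o_bdd (oG_meas S hS) 1 (oG_bdd S hS)

lemma oG_val (hn : 2 ≤ Fintype.card ι) : ∫ x in oCube ι, oG S hS x =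
    1 / ((Fintype.card ι : ℝ) - 1) * (((Fintype.card ι : ℝ) - S.card) / ((S.card : ℝ) + 1)) := by
  have k1 := o_key (oG S hS) (oG_meas S hS) (oG_bdd S hS) (fun c x hc => by
    have := oG_aff S hS c 0 hc x
    simp only [add_zero] at this
    exact this)
  have k2 := o_key' (oG S hS) (oG_meas S hS) (oG_bdd S hS) (fun c x hc => by
    have := oG_aff S hS c (1 - c) hc (1 - x)
    rw [← this]
    congr 1
    ext i
    simp only [Pi.sub_apply, Pi.one_apply, Pi.smul_apply, smul_eq_mul]
    ring)
  have hi := oG_int S hS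
  have i2 : IntegrableOn (fun x => oG S hS x * Finset.univ.inf' Finset.univ_nonempty x)
      (oCube ι) := Integrable.bdd_mul (c := 1) (o_int_inf _ _) (oG_meas S hS).aestronglyMeasurable
        (Filter.Eventually.of_forall (oG_bdd S hS))
  have i3 : IntegrableOn (fun x => oG S hS x * Finset.univ.sup' Finset.univ_nonempty x)
      (oCube ι) := Integrable.bdd_mul (c := 1) (o_int_sup _ _) (oG_meas S hS).aestronglyMeasurable
        (Filter.Eventually.of_forall (oG_bdd S hS))
  have i1 : IntegrableOn (fun x => oG S hS x * (1 - Finset.univ.sup' Finset.univ_nonempty x))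
      (oCube ι) := by
    simp only [mul_sub, mul_one]
    exact hi.sub i3
  have k3 : ∫ x in oCube ι, (S.inf' hS x - Finset.univ.inf' Finset.univ_nonempty x) =
      ∫ x in oCube ι, (oG S hS x - oG S hS x * (1 - Finset.univ.sup' Finset.univ_nonempty x)
        - oG S hS x * Finset.univ.inf' Finset.univ_nonempty x) := by
    congr 1
    ext x
    rw [← oG_mul]; ring
  have i4 : IntegrableOn (fun x => oG S hS x -
      oG S hS x * (1 - Finset.univ.sup' Finset.univ_nonempty x)) (oCube ι) := hi.sub i1
  rw [integral_sub i4 i2, integral_sub hi i1, k1, k2,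
    integral_sub (o_int_inf _ _) (o_int_inf _ _), o_min_sub, o_min] at k3
  have hn' : (2 : ℝ) ≤ Fintype.card ι := by exact_mod_cast hn
  have e1 : (Fintype.card ι : ℝ) - 1 ≠ 0 := by linarith
  have e2 : (Fintype.card ι : ℝ) + 1 ≠ 0 := by linarith
  have e3 : (S.card : ℝ) + 1 ≠ 0 := by positivity
  field_simp at k3 ⊢
  linarith
end

/-- Example 2: for `n ≥ 2` and a set function `a` with `a(∅) = 0`, `Σ_S a(S) = 1`, such that
the discrete Choquet integral `C_a` is nondecreasing in each variable, the orness average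
value of `C_a` over `[0,1]^n` is `(1/(n−1)) Σ_{S ⊆ [n]} a(S)(n−|S|)/(|S|+1)`. -/
theorem orness_average_choquet (n : ℕ) (hn : 2 ≤ n) (a : Finset (Fin n) → ℝ)
    (ha0 : a ∅ = 0) (ha1 : ∑ S : Finset (Fin n), a S = 1)
    (hmono : ∀ (x : Fin n → ℝ) (j : Fin n),
      Monotone fun t : ℝ => choquet a (Function.update x j t)) :
    (∫ x in Set.univ.pi fun _ : Fin n => Set.Ioo (0 : ℝ) 1,
        (choquet a x - Finset.univ.inf' ⟨⟨0, by omega⟩, Finset.mem_univ _⟩ x) /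
          (Finset.univ.sup' ⟨⟨0, by omega⟩, Finset.mem_univ _⟩ x -
            Finset.univ.inf' ⟨⟨0, by omega⟩, Finset.mem_univ _⟩ x))
      = 1 / ((n : ℝ) - 1) *
          ∑ S : Finset (Fin n), a S * ((n : ℝ) - S.card) / ((S.card : ℝ) + 1) := by
  have : Nonempty (Fin n) := ⟨⟨0, by omega⟩⟩
  have hpt : ∀ x : Fin n → ℝ,
      (choquet a x - Finset.univ.inf' Finset.univ_nonempty x) /
          (Finset.univ.sup' Finset.univ_nonempty x - Finset.univ.inf' Finset.univ_nonempty x)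
      = ∑ S : Finset (Fin n), a S * (if h : S.Nonempty then oG S h x else 0) := by
    intro x
    have : choquet a x - Finset.univ.inf' Finset.univ_nonempty x =
        ∑ S : Finset (Fin n), a S * ((if h : S.Nonempty then S.inf' h x else 0)
          - Finset.univ.inf' Finset.univ_nonempty x) := by
      simp only [mul_sub, Finset.sum_sub_distrib, ← Finset.sum_mul, ha1, one_mul, choquet]
    rw [this, Finset.sum_div]
    refine Finset.sum_congr rfl fun S _ => ?_
    by_cases h : S.Nonempty
    · simp only [h, dif_pos, oG, mul_div_assoc]
    · rw [Finset.not_nonempty_iff_eq_empty] at h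
      subst h
      simp [ha0]
  have hint : ∀ S : Finset (Fin n),
      IntegrableOn (fun x => a S * (if h : S.Nonempty then oG S h x else 0)) (oCube (Fin n)) := by
    intro S
    by_cases h : S.Nonempty
    · simp only [h, dif_pos]
      exact (oG_int S h).const_mul _
    · simp [h]
  calc _ = ∫ x in oCube (Fin n), ∑ S : Finset (Fin n),
        a S * (if h : S.Nonempty then oG S h x else 0) := by
        congr 1
        ext x
        exact hpt x
    _ = _ := by
      rw [integral_finsetSum _ fun S _ => hint S, Finset.mul_sum]
      refine Finset.sum_congr rfl fun S _ => ?_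
      by_cases h : S.Nonempty
      · simp only [h, dif_pos]
        rw [integral_const_mul, oG_val S h (by simpa using hn), Fintype.card_fin]
        ring
      · rw [Finset.not_nonempty_iff_eq_empty] at h
        subst h
        simp [ha0]
end

section
/- Let n ≥ 2 and let a : 2^{{1,…,n}} → ℝ be a set function with a(∅) = 0 and Σ_{S ⊆ {1,…,n}} a(S) = 1, chosen so that C_a(x) = Σ_{S ⊆ {1,…,n}} a(S) min_{i ∈ S} x_i is nondecreasing in each variable. Then the global orness value of C_a over [0,1]^n equals (1/(n−1)) Σ_{S ⊆ {1,…,n}} a(S) (n − |S|)/(|S| + 1); in particular it coincides with the orness average value of C_a over [0,1]^n. -/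
open MeasureTheory

lemma layer_cake_aux {α : Type*} [MeasurableSpace α] (μ : Measure α) [IsFiniteMeasure μ]
    (F G : α → ℝ) (hF : Integrable F μ) (hG : Measurable G)
    (hG01 : ∀ᵐ x ∂μ, G x ∈ Set.Ioo (0 : ℝ) 1) :
    ∫ x, F x * G x ∂μ
      = ∫ t in Set.Ioo (0 : ℝ) 1, ∫ x, Set.indicator {x | t < G x} F x ∂μ := by
  have hint : Integrable (Function.uncurry fun (x : α) (t : ℝ) =>
      Set.indicator {x | t < G x} F x) (μ.prod (volume.restrict (Set.Ioo (0 : ℝ) 1))) := by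
    have h1 : Integrable (fun p : α × ℝ => F p.1)
        (μ.prod (volume.restrict (Set.Ioo (0 : ℝ) 1))) := hF.comp_fst _
    have h2 : MeasurableSet {p : α × ℝ | p.2 < G p.1} :=
      measurableSet_lt measurable_snd (hG.comp measurable_fst)
    refine (h1.indicator h2).congr (Filter.Eventually.of_forall ?_)
    rintro ⟨x, t⟩
    simp [Set.indicator, Function.uncurry]
  rw [← integral_integral_swap hint]
  refine integral_congr_ae ?_
  filter_upwards [hG01] with x hx
  have : ∀ t : ℝ, Set.indicator {x | t < G x} F x = Set.indicator (Set.Iio (G x)) (fun _ => F x) t := by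
    intro t
    simp [Set.indicator]
  simp_rw [this]
  rw [integral_indicator measurableSet_Iio, Measure.restrict_restrict measurableSet_Iio]
  have : Set.Iio (G x) ∩ Set.Ioo 0 1 = Set.Ioo 0 (G x) := by
    ext t
    simp only [Set.mem_inter_iff, Set.mem_Iio, Set.mem_Ioo]
    constructor
    · rintro ⟨h1, h2, h3⟩; exact ⟨h2, h1⟩
    · rintro ⟨h1, h2⟩; exact ⟨h2, h1, h2.trans hx.2⟩
  rw [this]
  simp [hx.1.le, mul_comm]

lemma cube_scale_aux {n : ℕ} (F : (Fin n → ℝ) → ℝ)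
    (hs : ∀ (r : ℝ) (x : Fin n → ℝ), 0 < r → F (fun i => r * x i) = F x)
    (ht : ∀ (c : ℝ) (x : Fin n → ℝ), F (fun i => x i + c) = F x) (c r : ℝ) (hr : 0 < r) :
    ∫ x in Set.univ.pi fun _ : Fin n => Set.Ioo c (c + r), F x
      = r ^ n * ∫ x in Set.univ.pi fun _ : Fin n => Set.Ioo (0 : ℝ) 1, F x := by
  have hm : ∀ a b : ℝ, MeasurableSet (Set.univ.pi fun _ : Fin n => Set.Ioo a b) :=
    fun a b => MeasurableSet.univ_pi fun _ => measurableSet_Ioo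
  rw [← integral_indicator (hm _ _), ← integral_indicator (hm _ _)]
  rw [← integral_add_right_eq_self _ (fun _ : Fin n => c)]
  have h := Measure.integral_comp_smul (volume : Measure (Fin n → ℝ))
    (fun x => (Set.univ.pi fun _ : Fin n => Set.Ioo c (c + r)).indicator F (x + fun _ => c)) r
  have e : ∀ x : Fin n → ℝ,
      (Set.univ.pi fun _ : Fin n => Set.Ioo c (c + r)).indicator F (r • x + fun _ => c)
        = (Set.univ.pi fun _ : Fin n => Set.Ioo (0 : ℝ) 1).indicator F x := by
    intro x
    have h1 : (r • x + fun _ => c) ∈ (Set.univ.pi fun _ : Fin n => Set.Ioo c (c + r)) ↔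
        x ∈ (Set.univ.pi fun _ : Fin n => Set.Ioo (0 : ℝ) 1) := by
      simp only [Set.mem_univ_pi, Set.mem_Ioo, Pi.add_apply, Pi.smul_apply, smul_eq_mul]
      refine forall_congr' fun i => ?_
      constructor
      · rintro ⟨h1, h2⟩
        exact ⟨by by_contra! h; nlinarith, by by_contra! h; nlinarith⟩
      · rintro ⟨h1, h2⟩
        exact ⟨by nlinarith, by nlinarith⟩
    have h2 : F (r • x + fun _ => c) = F x := by
      have := ht c (fun i => r * x i)
      rw [hs r x hr] at this
      exact this
    by_cases hx : x ∈ (Set.univ.pi fun _ : Fin n => Set.Ioo (0 : ℝ) 1)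
    · rw [Set.indicator_of_mem hx, Set.indicator_of_mem (h1.2 hx), h2]
    · rw [Set.indicator_of_notMem hx, Set.indicator_of_notMem (fun h => hx (h1.1 h))]
  simp_rw [e] at h
  rw [h]
  simp [abs_of_pos hr]
  field_simp

lemma int_pow_aux (m : ℕ) : ∫ t in Set.Ioo (0 : ℝ) 1, (1 - t) ^ m = 1 / ((m : ℝ) + 1) := by
  rw [← integral_Ioc_eq_integral_Ioo, ← intervalIntegral.integral_of_le zero_le_one]
  rw [intervalIntegral.integral_comp_sub_left (fun t => t ^ m)]
  simp [integral_pow]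

lemma cube_mem_inf_aux {n : ℕ} (S : Finset (Fin n)) (hS : S.Nonempty) (x : Fin n → ℝ)
    (hx : x ∈ Set.univ.pi fun _ : Fin n => Set.Ioo (0 : ℝ) 1) :
    S.inf' hS x ∈ Set.Ioo (0 : ℝ) 1 := by
  obtain ⟨i, hi, h⟩ := S.exists_mem_eq_inf' hS x
  rw [h]; exact hx i (Set.mem_univ _)

lemma cube_mem_sup_aux {n : ℕ} (S : Finset (Fin n)) (hS : S.Nonempty) (x : Fin n → ℝ)
    (hx : x ∈ Set.univ.pi fun _ : Fin n => Set.Ioo (0 : ℝ) 1) :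
    S.sup' hS x ∈ Set.Ioo (0 : ℝ) 1 := by
  obtain ⟨i, hi, h⟩ := S.exists_mem_eq_sup' hS x
  rw [h]; exact hx i (Set.mem_univ _)

lemma cube_meas_aux {n : ℕ} : MeasurableSet (Set.univ.pi fun _ : Fin n => Set.Ioo (0 : ℝ) 1) :=
  MeasurableSet.univ_pi fun _ => measurableSet_Ioo

lemma cube_finite_aux {n : ℕ} : IsFiniteMeasure
    ((volume : Measure (Fin n → ℝ)).restrict (Set.univ.pi fun _ : Fin n => Set.Ioo (0 : ℝ) 1)) := by
  constructor
  simp [Real.volume_pi_Ioo]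

lemma meas_inf_aux {n : ℕ} (S : Finset (Fin n)) (hS : S.Nonempty) :
    Measurable fun x : Fin n → ℝ => S.inf' hS x := by
  have : Continuous fun x : Fin n → ℝ => S.inf' hS x :=
    Continuous.finset_inf'_apply hS fun i _ => continuous_apply i
  exact this.measurable

lemma meas_sup_aux {n : ℕ} (S : Finset (Fin n)) (hS : S.Nonempty) :
    Measurable fun x : Fin n → ℝ => S.sup' hS x := by
  have : Continuous fun x : Fin n → ℝ => S.sup' hS x :=
    Continuous.finset_sup'_apply hS fun i _ => continuous_apply i
  exact this.measurable

lemma bdd_int_aux {n : ℕ} (F : (Fin n → ℝ) → ℝ) (hF : Measurable F) (C : ℝ)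
    (hC : ∀ x ∈ (Set.univ.pi fun _ : Fin n => Set.Ioo (0 : ℝ) 1), |F x| ≤ C) :
    IntegrableOn F (Set.univ.pi fun _ : Fin n => Set.Ioo (0 : ℝ) 1) := by
  have := cube_finite_aux (n := n)
  refine Integrable.of_bound hF.aestronglyMeasurable C ?_
  exact (ae_restrict_iff' cube_meas_aux).2 (Filter.Eventually.of_forall hC)

lemma int_inf_set_aux {n : ℕ} (S : Finset (Fin n)) (hS : S.Nonempty) :
    ∫ x in Set.univ.pi fun _ : Fin n => Set.Ioo (0 : ℝ) 1, S.inf' hS x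
      = 1 / ((S.card : ℝ) + 1) := by
  have := cube_finite_aux (n := n)
  have h := layer_cake_aux
    (volume.restrict (Set.univ.pi fun _ : Fin n => Set.Ioo (0 : ℝ) 1)) (fun _ => (1 : ℝ))
    (fun x => S.inf' hS x) (integrable_const _) (meas_inf_aux S hS)
    ((ae_restrict_iff' cube_meas_aux).2 (Filter.Eventually.of_forall (cube_mem_inf_aux S hS)))
  simp only [one_mul] at h
  rw [h, ← int_pow_aux]
  refine setIntegral_congr_fun measurableSet_Ioo fun t htt => ?_
  have hm : MeasurableSet {x : Fin n → ℝ | t < S.inf' hS x} :=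
    measurableSet_lt measurable_const (meas_inf_aux S hS)
  rw [integral_indicator hm, Measure.restrict_restrict hm]
  have e : {x : Fin n → ℝ | t < S.inf' hS x} ∩ (Set.univ.pi fun _ : Fin n => Set.Ioo (0 : ℝ) 1)
      = Set.univ.pi fun i : Fin n => Set.Ioo (if i ∈ S then t else 0) 1 := by
    ext x
    simp only [Set.mem_inter_iff, Set.mem_ofPred_eq, Finset.lt_inf'_iff, Set.mem_univ_pi,
      Set.mem_Ioo]
    constructor
    · rintro ⟨h1, h2⟩ i
      refine ⟨?_, (h2 i).2⟩
      split_ifs with hi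
      · exact h1 i hi
      · exact (h2 i).1
    · intro h1
      refine ⟨fun i hi => by simpa [hi] using (h1 i).1, fun i => ⟨?_, (h1 i).2⟩⟩
      have := (h1 i).1
      split_ifs at this
      · exact htt.1.trans this
      · exact this
  rw [e, setIntegral_const, measureReal_def, Real.volume_pi_Ioo_toReal]
  · have : ∀ i : Fin n, (1 - (if i ∈ S then t else 0) : ℝ) = if i ∈ S then 1 - t else 1 := by
      intro i; split_ifs <;> simp
    simp [this, Finset.prod_ite_mem]
  · intro i
    dsimp only
    split_ifs
    · exact htt.2.le
    · exact zero_le_one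

lemma range_indep_aux {n : ℕ} (hu : (Finset.univ : Finset (Fin n)).Nonempty)
    (F : (Fin n → ℝ) → ℝ)
    (hF : IntegrableOn F (Set.univ.pi fun _ : Fin n => Set.Ioo (0 : ℝ) 1))
    (hs : ∀ (r : ℝ) (x : Fin n → ℝ), 0 < r → F (fun i => r * x i) = F x)
    (ht : ∀ (c : ℝ) (x : Fin n → ℝ), F (fun i => x i + c) = F x) :
    ∫ x in Set.univ.pi fun _ : Fin n => Set.Ioo (0 : ℝ) 1,
        F x * (Finset.univ.sup' hu x - Finset.univ.inf' hu x)
      = ((n : ℝ) - 1) / ((n : ℝ) + 1) *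
        ∫ x in Set.univ.pi fun _ : Fin n => Set.Ioo (0 : ℝ) 1, F x := by
  have := cube_finite_aux (n := n)
  have key : ∀ (G : (Fin n → ℝ) → ℝ) (hG : Measurable G)
      (hG1 : ∀ x ∈ (Set.univ.pi fun _ : Fin n => Set.Ioo (0 : ℝ) 1), G x ∈ Set.Ioo (0 : ℝ) 1)
      (c : ℝ → ℝ)
      (hset : ∀ t ∈ Set.Ioo (0 : ℝ) 1, {x : Fin n → ℝ | t < G x} ∩
        (Set.univ.pi fun _ : Fin n => Set.Ioo (0 : ℝ) 1)
          = Set.univ.pi fun _ : Fin n => Set.Ioo (c t) (c t + (1 - t))),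
      ∫ x in Set.univ.pi fun _ : Fin n => Set.Ioo (0 : ℝ) 1, F x * G x
        = 1 / ((n : ℝ) + 1) * ∫ x in Set.univ.pi fun _ : Fin n => Set.Ioo (0 : ℝ) 1, F x := by
    intro G hG hG1 c hset
    rw [layer_cake_aux _ F G hF hG
      ((ae_restrict_iff' cube_meas_aux).2 (Filter.Eventually.of_forall hG1)), ← int_pow_aux,
      ← integral_mul_const]
    refine setIntegral_congr_fun measurableSet_Ioo fun t htt => ?_
    have hm : MeasurableSet {x : Fin n → ℝ | t < G x} := measurableSet_lt measurable_const hG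
    rw [integral_indicator hm, Measure.restrict_restrict hm, hset t htt,
      cube_scale_aux F hs ht _ _ (by linarith [htt.2])]
  have k1 := key (fun x => Finset.univ.inf' hu x) (meas_inf_aux _ hu)
    (cube_mem_inf_aux _ hu) (fun t => t) (by
      intro t htt
      ext x
      simp only [Set.mem_inter_iff, Set.mem_ofPred_eq, Finset.lt_inf'_iff, Set.mem_univ_pi,
        Set.mem_Ioo, Finset.mem_univ, true_imp_iff]
      constructor
      · rintro ⟨h1, h2⟩ i
        exact ⟨h1 i, by linarith [(h2 i).2]⟩
      · intro h
        exact ⟨fun i => (h i).1, fun i => ⟨htt.1.trans (h i).1, by linarith [(h i).2]⟩⟩)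
  have k2 := key (fun x => 1 - Finset.univ.sup' hu x) (measurable_const.sub (meas_sup_aux _ hu))
    (fun x hx => by
      have := cube_mem_sup_aux _ hu x hx
      exact ⟨by linarith [this.2], by linarith [this.1]⟩) (fun t => 0) (by
      intro t htt
      ext x
      have e : t < 1 - Finset.univ.sup' hu x ↔ Finset.univ.sup' hu x < 1 - t :=
        ⟨fun h => by linarith, fun h => by linarith⟩
      simp only [Set.mem_inter_iff, Set.mem_ofPred_eq, e, Finset.sup'_lt_iff, Set.mem_univ_pi,
        Set.mem_Ioo, Finset.mem_univ, true_imp_iff]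
      constructor
      · rintro ⟨h1, h2⟩ i
        exact ⟨(h2 i).1, by linarith [h1 i]⟩
      · intro h
        exact ⟨fun i => by linarith [(h i).2],
          fun i => ⟨(h i).1, by linarith [(h i).2, htt.1]⟩⟩)
  have mulint : ∀ (G : (Fin n → ℝ) → ℝ) (hG : Measurable G)
      (hG1 : ∀ x ∈ (Set.univ.pi fun _ : Fin n => Set.Ioo (0 : ℝ) 1), G x ∈ Set.Ioo (0 : ℝ) 1),
      IntegrableOn (fun x => F x * G x) (Set.univ.pi fun _ : Fin n => Set.Ioo (0 : ℝ) 1) := by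
    intro G hG hG1
    refine Integrable.mul_bdd (c := 1) hF hG.aestronglyMeasurable ?_
    refine (ae_restrict_iff' cube_meas_aux).2 (Filter.Eventually.of_forall fun x hx => ?_)
    have := hG1 x hx
    rw [Real.norm_eq_abs, abs_of_pos this.1]
    exact this.2.le
  have i1 := mulint _ (meas_inf_aux _ hu) (cube_mem_inf_aux _ hu)
  have i2 : IntegrableOn (fun x => F x * (1 - Finset.univ.sup' hu x))
      (Set.univ.pi fun _ : Fin n => Set.Ioo (0 : ℝ) 1) := mulint _ (measurable_const.sub (meas_sup_aux _ hu)) (fun x hx => by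
      have := cube_mem_sup_aux _ hu x hx
      exact (⟨by linarith [this.2], by linarith [this.1]⟩ :
        1 - Finset.univ.sup' hu x ∈ Set.Ioo (0 : ℝ) 1))
  have e : ∀ x, F x * (Finset.univ.sup' hu x - Finset.univ.inf' hu x)
      = F x - F x * (1 - Finset.univ.sup' hu x) - F x * Finset.univ.inf' hu x := by
    intro x; ring
  simp_rw [e]
  rw [integral_sub (f := fun x => F x - F x * (1 - Finset.univ.sup' hu x)) (hF.sub i2) i1,
    integral_sub hF i2, k1, k2]
  field_simp
  ring

lemma inf_affine_aux {n : ℕ} (S : Finset (Fin n)) (hS : S.Nonempty) (r c : ℝ) (hr : 0 < r)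
    (x : Fin n → ℝ) : S.inf' hS (fun i => r * x i + c) = r * S.inf' hS x + c := by
  have hm : Monotone fun t : ℝ => r * t + c := fun a b h => by
    have := mul_le_mul_of_nonneg_left h hr.le
    simpa using this
  exact (Finset.apply_inf'_eq_inf'_comp hS (fun t : ℝ => r * t + c)
    (fun a b => hm.map_min)).symm

lemma sup_affine_aux {n : ℕ} (S : Finset (Fin n)) (hS : S.Nonempty) (r c : ℝ) (hr : 0 < r)
    (x : Fin n → ℝ) : S.sup' hS (fun i => r * x i + c) = r * S.sup' hS x + c := by
  have hm : Monotone fun t : ℝ => r * t + c := fun a b h => by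
    have := mul_le_mul_of_nonneg_left h hr.le
    simpa using this
  exact (Finset.apply_sup'_eq_sup'_comp hS (fun t : ℝ => r * t + c)
    (fun a b => hm.map_max)).symm

lemma choquet_affine_aux {n : ℕ} (a : Finset (Fin n) → ℝ) (ha0 : a ∅ = 0)
    (ha1 : ∑ S : Finset (Fin n), a S = 1) (r c : ℝ) (hr : 0 < r) (x : Fin n → ℝ) :
    choquet a (fun i => r * x i + c) = r * choquet a x + c := by
  unfold choquet
  have : c = ∑ S : Finset (Fin n), a S * c := by rw [← Finset.sum_mul, ha1, one_mul]
  conv_rhs => rw [this]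
  rw [Finset.mul_sum, ← Finset.sum_add_distrib]
  refine Finset.sum_congr rfl fun S _ => ?_
  by_cases h : S.Nonempty
  · simp only [h, dif_pos, inf_affine_aux S h r c hr x]; ring
  · rw [Finset.not_nonempty_iff_eq_empty] at h
    subst h; simp [ha0]

lemma choquet_bound_aux {n : ℕ} (hu : (Finset.univ : Finset (Fin n)).Nonempty)
    (a : Finset (Fin n) → ℝ) (ha0 : a ∅ = 0)
    (ha1 : ∑ S : Finset (Fin n), a S = 1) (x : Fin n → ℝ) :
    |choquet a x - Finset.univ.inf' hu x|
      ≤ (∑ S, |a S|) * (Finset.univ.sup' hu x - Finset.univ.inf' hu x) := by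
  have : choquet a x - Finset.univ.inf' hu x = ∑ S : Finset (Fin n),
      a S * ((if h : S.Nonempty then S.inf' h x else 0) - Finset.univ.inf' hu x) := by
    simp_rw [mul_sub, Finset.sum_sub_distrib, ← Finset.sum_mul, ha1, one_mul]
    rfl
  rw [this, Finset.sum_mul]
  refine (Finset.abs_sum_le_sum_abs _ _).trans (Finset.sum_le_sum fun S _ => ?_)
  by_cases h : S.Nonempty
  · rw [abs_mul]
    refine mul_le_mul_of_nonneg_left ?_ (abs_nonneg _)
    simp only [h, dif_pos]
    obtain ⟨i, hi, e⟩ := S.exists_mem_eq_inf' h x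
    rw [e]
    have h1 := Finset.inf'_le x (Finset.mem_univ i)
    have h2 := Finset.le_sup' x (Finset.mem_univ i)
    rw [abs_of_nonneg (by linarith)]
    linarith
  · rw [Finset.not_nonempty_iff_eq_empty] at h
    subst h; simp [ha0]

lemma choquet_meas_aux {n : ℕ} (a : Finset (Fin n) → ℝ) : Measurable (choquet a) := by
  unfold choquet
  refine Finset.measurable_sum _ fun S _ => Measurable.const_mul ?_ _
  by_cases h : S.Nonempty
  · simp only [h, dif_pos]; exact meas_inf_aux S h
  · simp only [h, dif_neg, not_false_eq_true]; exact measurable_const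

lemma inf_int_aux {n : ℕ} (S : Finset (Fin n)) (h : S.Nonempty) :
    IntegrableOn (fun x : Fin n → ℝ => S.inf' h x)
      (Set.univ.pi fun _ : Fin n => Set.Ioo (0 : ℝ) 1) :=
  bdd_int_aux _ (meas_inf_aux S h) 1 fun x hx => by
    have := cube_mem_inf_aux S h x hx
    rw [abs_of_pos this.1]; exact this.2.le

lemma sup_int_aux {n : ℕ} (S : Finset (Fin n)) (h : S.Nonempty) :
    IntegrableOn (fun x : Fin n → ℝ => S.sup' h x)
      (Set.univ.pi fun _ : Fin n => Set.Ioo (0 : ℝ) 1) :=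
  bdd_int_aux _ (meas_sup_aux S h) 1 fun x hx => by
    have := cube_mem_sup_aux S h x hx
    rw [abs_of_pos this.1]; exact this.2.le

lemma choquet_term_int_aux {n : ℕ} (a : Finset (Fin n) → ℝ) (S : Finset (Fin n)) :
    IntegrableOn (fun x : Fin n → ℝ => a S * (if h : S.Nonempty then S.inf' h x else 0))
      (Set.univ.pi fun _ : Fin n => Set.Ioo (0 : ℝ) 1) := by
  refine Integrable.const_mul ?_ _
  by_cases h : S.Nonempty
  · simp only [h, dif_pos]; exact inf_int_aux S h
  · simp [h]

lemma choquet_int_aux {n : ℕ} (a : Finset (Fin n) → ℝ) :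
    IntegrableOn (choquet a) (Set.univ.pi fun _ : Fin n => Set.Ioo (0 : ℝ) 1) :=
  integrable_finsetSum _ fun S _ => choquet_term_int_aux a S

lemma choquet_integral_aux {n : ℕ} (a : Finset (Fin n) → ℝ) (ha0 : a ∅ = 0) :
    ∫ x in Set.univ.pi fun _ : Fin n => Set.Ioo (0 : ℝ) 1, choquet a x
      = ∑ S : Finset (Fin n), a S / ((S.card : ℝ) + 1) := by
  unfold choquet
  rw [integral_finsetSum _ fun S _ => choquet_term_int_aux a S]
  refine Finset.sum_congr rfl fun S _ => ?_
  rw [integral_const_mul]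
  by_cases h : S.Nonempty
  · simp only [h, dif_pos, int_inf_set_aux S h]; ring
  · rw [Finset.not_nonempty_iff_eq_empty] at h
    subst h; simp [ha0]

/-- For `n ≥ 2` and a set function `a` with `a(∅) = 0`, `Σ_S a(S) = 1`, such that the
discrete Choquet integral `C_a` is nondecreasing in each variable, the global orness value
of `C_a` over `[0,1]^n`, namely `(C̄_a − M̄in)/(M̄ax − M̄in)`, equals
`(1/(n−1)) Σ_{S ⊆ [n]} a(S)(n−|S|)/(|S|+1)`; in particular it coincides with the orness
average value of `C_a` over `[0,1]^n`. -/
theorem global_orness_choquet (n : ℕ) (hn : 2 ≤ n) (a : Finset (Fin n) → ℝ)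
    (ha0 : a ∅ = 0) (ha1 : ∑ S : Finset (Fin n), a S = 1)
    (hmono : ∀ (x : Fin n → ℝ) (j : Fin n),
      Monotone fun t : ℝ => choquet a (Function.update x j t)) :
    ((∫ x in Set.univ.pi fun _ : Fin n => Set.Ioo (0 : ℝ) 1, choquet a x) -
          (∫ x in Set.univ.pi fun _ : Fin n => Set.Ioo (0 : ℝ) 1,
            Finset.univ.inf' ⟨⟨0, by omega⟩, Finset.mem_univ _⟩ x)) /
        ((∫ x in Set.univ.pi fun _ : Fin n => Set.Ioo (0 : ℝ) 1,
            Finset.univ.sup' ⟨⟨0, by omega⟩, Finset.mem_univ _⟩ x) -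
          (∫ x in Set.univ.pi fun _ : Fin n => Set.Ioo (0 : ℝ) 1,
            Finset.univ.inf' ⟨⟨0, by omega⟩, Finset.mem_univ _⟩ x))
        = 1 / ((n : ℝ) - 1) *
            ∑ S : Finset (Fin n), a S * ((n : ℝ) - S.card) / ((S.card : ℝ) + 1) ∧
      ((∫ x in Set.univ.pi fun _ : Fin n => Set.Ioo (0 : ℝ) 1, choquet a x) -
          (∫ x in Set.univ.pi fun _ : Fin n => Set.Ioo (0 : ℝ) 1,
            Finset.univ.inf' ⟨⟨0, by omega⟩, Finset.mem_univ _⟩ x)) /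
        ((∫ x in Set.univ.pi fun _ : Fin n => Set.Ioo (0 : ℝ) 1,
            Finset.univ.sup' ⟨⟨0, by omega⟩, Finset.mem_univ _⟩ x) -
          (∫ x in Set.univ.pi fun _ : Fin n => Set.Ioo (0 : ℝ) 1,
            Finset.univ.inf' ⟨⟨0, by omega⟩, Finset.mem_univ _⟩ x))
        = ∫ x in Set.univ.pi fun _ : Fin n => Set.Ioo (0 : ℝ) 1,
            (choquet a x - Finset.univ.inf' ⟨⟨0, by omega⟩, Finset.mem_univ _⟩ x) /
              (Finset.univ.sup' ⟨⟨0, by omega⟩, Finset.mem_univ _⟩ x -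
                Finset.univ.inf' ⟨⟨0, by omega⟩, Finset.mem_univ _⟩ x) := by
  have hu : (Finset.univ : Finset (Fin n)).Nonempty := ⟨⟨0, by omega⟩, Finset.mem_univ _⟩
  have hn' : (2 : ℝ) ≤ n := by exact_mod_cast hn
  have hsub : (∫ x in Set.univ.pi fun _ : Fin n => Set.Ioo (0 : ℝ) 1, Finset.univ.sup' hu x) -
      (∫ x in Set.univ.pi fun _ : Fin n => Set.Ioo (0 : ℝ) 1, Finset.univ.inf' hu x)
      = ((n : ℝ) - 1) / ((n : ℝ) + 1) := by
    rw [← integral_sub (sup_int_aux _ hu) (inf_int_aux _ hu)]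
    have := cube_finite_aux (n := n)
    have h := range_indep_aux hu (fun _ => 1) (integrable_const _) (fun _ _ _ => rfl)
      (fun _ _ => rfl)
    simp only [one_mul] at h
    rw [h]
    rw [setIntegral_const, measureReal_def, Real.volume_pi_Ioo_toReal (fun _ => zero_le_one)]
    simp
  have hC := choquet_integral_aux a ha0
  have hI := int_inf_set_aux (Finset.univ : Finset (Fin n)) hu
  rw [Finset.card_univ, Fintype.card_fin] at hI
  have hb := choquet_bound_aux hu a ha0 ha1
  have hrange : ∀ x : Fin n → ℝ, 0 ≤ Finset.univ.sup' hu x - Finset.univ.inf' hu x := by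
    intro x
    have h1 := Finset.inf'_le x (Finset.mem_univ hu.choose)
    have h2 := Finset.le_sup' x (Finset.mem_univ hu.choose)
    linarith
  have hnum := range_indep_aux hu (fun x => (choquet a x - Finset.univ.inf' hu x) /
      (Finset.univ.sup' hu x - Finset.univ.inf' hu x))
    (bdd_int_aux _ (((choquet_meas_aux a).sub (meas_inf_aux _ hu)).div
        ((meas_sup_aux _ hu).sub (meas_inf_aux _ hu))) (∑ S, |a S|) (fun x _ => by
      rw [abs_div, abs_of_nonneg (hrange x)]
      exact div_le_of_le_mul₀ (hrange x) (Finset.sum_nonneg fun _ _ => abs_nonneg _) (hb x)))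
    (fun r x hr => by
      have h1 := choquet_affine_aux a ha0 ha1 r 0 hr x
      have h2 := inf_affine_aux Finset.univ hu r 0 hr x
      have h3 := sup_affine_aux Finset.univ hu r 0 hr x
      simp only [add_zero] at h1 h2 h3
      simp only [h1, h2, h3, ← mul_sub]
      exact mul_div_mul_left _ _ hr.ne')
    (fun c x => by
      have h1 := choquet_affine_aux a ha0 ha1 1 c one_pos x
      have h2 := inf_affine_aux Finset.univ hu 1 c one_pos x
      have h3 := sup_affine_aux Finset.univ hu 1 c one_pos x
      simp only [one_mul] at h1 h2 h3
      simp only [h1, h2, h3, add_sub_add_right_eq_sub])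
  have hcancel : ∀ x : Fin n → ℝ, (choquet a x - Finset.univ.inf' hu x) /
      (Finset.univ.sup' hu x - Finset.univ.inf' hu x) *
      (Finset.univ.sup' hu x - Finset.univ.inf' hu x) = choquet a x - Finset.univ.inf' hu x := by
    intro x
    by_cases h : Finset.univ.sup' hu x - Finset.univ.inf' hu x = 0
    · have := hb x
      rw [h, mul_zero] at this
      rw [h, mul_zero, abs_nonpos_iff.1 this]
    · exact div_mul_cancel₀ _ h
  simp_rw [hcancel] at hnum
  rw [integral_sub (choquet_int_aux a) (inf_int_aux _ hu)] at hnum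
  have hne : ((n : ℝ) - 1) / ((n : ℝ) + 1) ≠ 0 := by
    have : 0 < ((n : ℝ) - 1) / ((n : ℝ) + 1) := div_pos (by linarith) (by linarith)
    exact this.ne'
  constructor
  · rw [hsub, hC, hI]
    have h1 : (n : ℝ) - 1 ≠ 0 := by intro h; linarith
    have h2 : (n : ℝ) + 1 ≠ 0 := by positivity
    have : (1 : ℝ) / ((n : ℝ) + 1) = ∑ S : Finset (Fin n), a S * (1 / ((n : ℝ) + 1)) := by
      rw [← Finset.sum_mul, ha1, one_mul]
    rw [this, ← Finset.sum_sub_distrib, Finset.sum_div, Finset.mul_sum]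
    refine Finset.sum_congr rfl fun S _ => ?_
    have h3 : (S.card : ℝ) + 1 ≠ 0 := Nat.cast_add_one_ne_zero _
    field_simp
    ring
  · rw [hsub, hnum, mul_div_cancel_left₀ _ hne]
end
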